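/- Assume GRH for L(s,χ). There is an absolute constant C such that for every primitive Dirichlet character χ mod M, every real t with |t| ≥ 2, every X with 4 ≤ X ≤ t², setting σ₁ = 1/2 + 4/log X: for all s = σ + it with σ ≥ σ₁, | L′/L(s,χ) + Σ_{n≤X²} Λ_X(n)χ(n)·n^{−s} | ≤ C·E_χ(X,t), where E_χ(X,t) = |Σ_{n≤X²} Λ_X(n)χ(n)·n^{−σ₁−it}| + log(M(1+|t|)). -/

import Mathlib

open Complex MeasureTheory ProbabilityTheory Filter Finset DirichletCharacter

noncomputable section

/-- The finset of primes `p ≤ X²`. -/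
def primesUptoSq (X : ℝ) : Finset ℕ := (Finset.range (⌊X ^ 2⌋₊ + 1)).filter Nat.Prime

/-- The finset of primes `p ≤ x`. -/
def primesUpto (x : ℝ) : Finset ℕ := (Finset.range (⌊x⌋₊ + 1)).filter Nat.Prime

/-- The Dirichlet polynomial `P_χ(γ) = ∑_{p ≤ X²} χ(p) p^{-1/2 - iγ}`. -/
def Pgamma {N : ℕ} (χ : DirichletCharacter ℂ N) (X γ : ℝ) : ℂ :=
  ∑ p ∈ primesUptoSq X, χ (p : ZMod N) * (p : ℂ) ^ (-(1 / 2 : ℂ) - I * γ)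

/-- `P_ℒ(γ) = a₁ P_{χ₁}(γ) + a₂ P_{χ₂}(γ)`. -/
def PLgamma {N₁ N₂ : ℕ} (a₁ a₂ : ℝ) (χ₁ : DirichletCharacter ℂ N₁)
    (χ₂ : DirichletCharacter ℂ N₂) (X γ : ℝ) : ℂ :=
  (a₁ : ℂ) * Pgamma χ₁ X γ + (a₂ : ℂ) * Pgamma χ₂ X γ

/-- The value of the random polynomial `P_χ(θ) = ∑_{p ≤ X²} χ(p) e^{2πiθ_p}/√p` at a
point `v = (θ_p)_p`. -/
def Ptheta {N : ℕ} (χ : DirichletCharacter ℂ N) (X : ℝ) (v : ℕ → ℝ) : ℂ :=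
  ∑ p ∈ primesUptoSq X, χ (p : ZMod N) * Complex.exp (2 * Real.pi * I * (v p)) / Real.sqrt p

/-- `P_ℒ(θ) = a₁ P_{χ₁}(θ) + a₂ P_{χ₂}(θ)`. -/
def PLtheta {N₁ N₂ : ℕ} (a₁ a₂ : ℝ) (χ₁ : DirichletCharacter ℂ N₁)
    (χ₂ : DirichletCharacter ℂ N₂) (X : ℝ) (v : ℕ → ℝ) : ℂ :=
  (a₁ : ℂ) * Ptheta χ₁ X v + (a₂ : ℂ) * Ptheta χ₂ X v

/-- The ordinates `γ ∈ (0, T]` of the zeros of `ζ` on the critical line (under RH, these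
are exactly the ordinates of the nontrivial zeros of `ζ` in the upper half plane up to `T`). -/
def zetaZerosIn (T : ℝ) : Set ℝ :=
  {γ : ℝ | 0 < γ ∧ γ ≤ T ∧ riemannZeta (1 / 2 + I * γ) = 0}

/-- `N(T)`, the number of nontrivial zeros of `ζ` with ordinate in `(0, T]`. -/
def NT (T : ℝ) : ℝ := ((zetaZerosIn T).ncard : ℝ)

/-- The Riemann Hypothesis: all nontrivial zeros of `ζ` lie on the critical line. -/
def RHzeta : Prop := ∀ s : ℂ, 0 < s.re → s.re < 1 → riemannZeta s = 0 → s.re = 1 / 2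

/-- GRH for `L(s, χ)`: all nontrivial zeros of `L(s,χ)` lie on the critical line. -/
def GRHchar {N : ℕ} [NeZero N] (χ : DirichletCharacter ℂ N) : Prop :=
  ∀ s : ℂ, 0 < s.re → s.re < 1 → LFunction χ s = 0 → s.re = 1 / 2

/-- Hypothesis 𝒟: no nontrivial zero of `L(s,χ)` coincides with a nontrivial zero of `ζ`. -/
def HypD {N : ℕ} [NeZero N] (χ : DirichletCharacter ℂ N) : Prop :=
  ∀ s : ℂ, 0 < s.re → s.re < 1 → riemannZeta s = 0 → LFunction χ s ≠ 0

/-- Hypothesis `H_{α,χ}`: there is `c > 0` such that for every `C ∈ (0,1)`, the limsup as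
`T → ∞` of the proportion of ordinates `γ ∈ (0,T]` of zeros of `ζ` lying within `C/log T`
of an ordinate of a (critical-line) zero of `L(s,χ)` is at most `c C^α`. -/
def HypH {N : ℕ} [NeZero N] (χ : DirichletCharacter ℂ N) (α : ℝ) : Prop :=
  ∃ c > (0 : ℝ), ∀ C : ℝ, 0 < C → C < 1 →
    Filter.limsup (fun T : ℝ =>
      (((zetaZerosIn T ∩ {γ : ℝ | ∃ x : ℝ,
          LFunction χ (1 / 2 + I * x) = 0 ∧ |x - γ| ≤ C / Real.log T}).ncard : ℝ) / NT T))
      Filter.atTop ≤ c * C ^ α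

/-- `Ψ = ∑_{p ≤ X²} 1/p`. -/
def Psi (X : ℝ) : ℝ := ∑ p ∈ primesUptoSq X, (1 : ℝ) / p

/-- `Ψ(T) = ∑_{p ≤ T} 1/p`. -/
def PsiT (T : ℝ) : ℝ := ∑ p ∈ primesUpto T, (1 : ℝ) / p

/-- The weight `w_X(n)`. -/
def wX (X : ℝ) (n : ℕ) : ℝ :=
  if (n : ℝ) ≤ X then 1 else Real.log (X ^ 2 / n) / Real.log X

/-- `Λ_X(n) = Λ(n) w_X(n)`. -/
def LambdaX (X : ℝ) (n : ℕ) : ℝ := ArithmeticFunction.vonMangoldt n * wX X n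

/-- `σ₁ = 1/2 + 4/log X`. -/
def sigma1 (X : ℝ) : ℝ := 1 / 2 + 4 / Real.log X

/-- `E_χ(X,t) = |∑_{n ≤ X²} Λ_X(n) χ(n) n^{-σ₁-it}| + log(M(1+|t|))`. -/
def EchiT {N : ℕ} (χ : DirichletCharacter ℂ N) (X t : ℝ) : ℝ :=
  ‖∑ m ∈ Finset.Icc 1 ⌊X ^ 2⌋₊,
      (LambdaX X m : ℂ) * χ (m : ZMod N) * (m : ℂ) ^ (-(sigma1 X : ℂ) - I * t)‖
    + Real.log (N * (1 + |t|))

open scoped Topology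

/-- Filter of points going to infinity in the closed right half-plane. -/
abbrev infR : Filter ℂ := Bornology.cobounded ℂ ⊓ 𝓟 {z : ℂ | 0 ≤ z.re}

lemma infR_bound {H : ℂ → ℂ} {g : ℝ → ℝ} (hO : H =O[infR] fun z => g ‖z‖) :
    ∃ C > 0, ∃ R : ℝ, ∀ z : ℂ, 0 ≤ z.re → R ≤ ‖z‖ → ‖H z‖ ≤ C * ‖g ‖z‖‖ := by
  obtain ⟨C, hC, h⟩ := hO.exists_pos
  rw [Asymptotics.IsBigOWith, Filter.eventually_inf_principal] at h
  rw [(Filter.hasBasis_cobounded_norm).eventually_iff] at h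
  obtain ⟨R, _, hR⟩ := h
  refine ⟨C, hC, R, fun z hz hzR => hR ?_ hz⟩
  simpa using hzR

lemma halfplane_integrable {H : ℂ → ℂ} {η : ℝ} (hη : 0 < η)
    (hd : DifferentiableOn ℂ H {z | -η < z.re})
    (hO : H =O[infR] fun z => ‖z‖ ^ (-(3/2) : ℝ)) :
    Integrable (fun y : ℝ => H (y * I)) := by
  have hcont : Continuous (fun y : ℝ => H (y * I)) := by
    refine hd.continuousOn.comp_continuous (by fun_prop) ?_
    intro y; simp [hη]
  obtain ⟨C, hC, R, hR⟩ := infR_bound (g := fun x => x ^ (-(3/2) : ℝ)) hO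
  refine hcont.locallyIntegrable.integrable_of_isBigO_cocompact
    (g := fun y : ℝ => (1 + ‖y‖) ^ (-(3/2) : ℝ)) ?_ ?_
  · refine Asymptotics.IsBigO.of_bound (C * 2 ^ (3/2 : ℝ)) ?_
    rw [← Metric.cobounded_eq_cocompact]
    rw [(Filter.hasBasis_cobounded_norm).eventually_iff]
    refine ⟨max R 1, trivial, fun y hy => ?_⟩
    have hy' : R ≤ |y| ∧ 1 ≤ |y| := by simpa using hy
    have h1 := hR (y * I) (by simp) (by simpa using hy'.1)
    refine h1.trans ?_
    simp only [norm_mul, norm_real, norm_I, mul_one, Real.norm_eq_abs]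
    rw [mul_assoc]
    have h2 : (0:ℝ) < |y| := by linarith [hy'.2]
    gcongr
    rw [abs_of_pos (a := |y| ^ (-(3/2) : ℝ)) (by positivity), abs_of_pos (a := (1 + |y|) ^ (-(3/2) : ℝ)) (by positivity)]
    have h3 : (2:ℝ) ^ (3/2 : ℝ) * (1 + |y|) ^ (-(3/2) : ℝ) = ((1 + |y|) / 2) ^ (-(3/2) : ℝ) := by
      rw [Real.div_rpow (by positivity) (by norm_num), Real.rpow_neg (x := 2) (by norm_num), div_inv_eq_mul, mul_comm]
    rw [h3]
    refine Real.rpow_le_rpow_of_nonpos (by positivity) (by linarith [hy'.2]) (by norm_num)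
  · exact (integrable_one_add_norm (by simp; norm_num)).integrableAtFilter _

lemma halfplane_integral_zero {H : ℂ → ℂ} {η : ℝ} (hη : 0 < η)
    (hd : DifferentiableOn ℂ H {z | -η < z.re})
    (hO : H =O[infR] fun z => ‖z‖ ^ (-(3/2) : ℝ)) :
    ∫ y : ℝ, H (y * I) = 0 := by
  have hint := halfplane_integrable hη hd hO
  obtain ⟨C, hC, R, hR⟩ := infR_bound (g := fun x => x ^ (-(3/2) : ℝ)) hO
  have hlim := intervalIntegral_tendsto_integral hint tendsto_neg_atTop_atBot tendsto_id
  refine tendsto_nhds_unique hlim ?_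
  have hbd : Tendsto (fun T : ℝ => 4 * C * T ^ (-(1/2) : ℝ)) atTop (nhds 0) := by
    have := (tendsto_rpow_neg_atTop (y := 1/2) (by norm_num)).const_mul (4 * C)
    simpa using this
  refine squeeze_zero_norm' ?_ hbd
  filter_upwards [eventually_ge_atTop (max R 1)] with T hT
  have hTR : R ≤ T := le_trans (le_max_left _ _) hT
  have hT1 : 1 ≤ T := le_trans (le_max_right _ _) hT
  have hT0 : 0 < T := by linarith
  have hbdd : ∀ z : ℂ, 0 ≤ z.re → T ≤ ‖z‖ → ‖H z‖ ≤ C * T ^ (-(3/2) : ℝ) := by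
    intro z hz hzT
    refine (hR z hz (hTR.trans hzT)).trans ?_
    have : 0 < ‖z‖ := by linarith
    rw [Real.norm_of_nonneg (by positivity)]
    gcongr C * ?_
    exact Real.rpow_le_rpow_of_nonpos hT0 hzT (by norm_num)
  have hrect := Complex.integral_boundary_rect_eq_zero_of_differentiableOn H (⟨0, -T⟩ : ℂ) ⟨T, T⟩ (by
    refine hd.mono ?_
    intro z hz
    rw [Complex.mem_reProdIm] at hz
    have := hz.1
    simp only [Set.uIcc_of_le hT0.le, Set.mem_Icc] at this
    simp only [Set.mem_ofPred_eq]
    linarith)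
  simp only [ofReal_zero, zero_add] at hrect
  have e1 : ‖∫ x in (0:ℝ)..T, H (x + ((-T : ℝ) : ℂ) * I)‖ ≤ C * T ^ (-(3/2) : ℝ) * |T - 0| := by
    refine intervalIntegral.norm_integral_le_of_norm_le_const fun x hx => ?_
    rw [Set.uIoc_of_le hT0.le] at hx
    refine hbdd _ (by simpa using hx.1.le) ?_
    refine le_trans ?_ (abs_im_le_norm _)
    simp [abs_of_pos hT0]
  have e2 : ‖∫ x in (0:ℝ)..T, H (x + (T : ℂ) * I)‖ ≤ C * T ^ (-(3/2) : ℝ) * |T - 0| := by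
    refine intervalIntegral.norm_integral_le_of_norm_le_const fun x hx => ?_
    rw [Set.uIoc_of_le hT0.le] at hx
    refine hbdd _ (by simpa using hx.1.le) ?_
    refine le_trans ?_ (abs_im_le_norm _)
    simp [abs_of_pos hT0]
  have e3 : ‖∫ y in (-T)..T, H ((T : ℂ) + y * I)‖ ≤ C * T ^ (-(3/2) : ℝ) * |T - -T| := by
    refine intervalIntegral.norm_integral_le_of_norm_le_const fun x hx => ?_
    refine hbdd _ (by simpa using hT0.le) ?_
    refine le_trans ?_ (abs_re_le_norm _)
    simp [abs_of_pos hT0]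
  have e4 : ‖∫ y in (-T)..T, H (y * I)‖ = ‖I • ∫ y in (-T)..T, H (y * I)‖ := by
    rw [norm_smul]; simp
  have e5 : T ^ (-(1/2) : ℝ) = T ^ (-(3/2) : ℝ) * T := by
    rw [← Real.rpow_add_one hT0.ne']; norm_num
  simp only [id]
  rw [e4, ← sub_eq_zero.mp hrect]
  refine (norm_add_le _ _).trans ?_
  refine (add_le_add (norm_sub_le _ _) le_rfl).trans ?_
  rw [norm_smul, norm_I, one_mul, e5]
  rw [sub_zero, abs_of_pos hT0] at e1 e2
  rw [abs_of_pos (by linarith)] at e3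
  nlinarith [e1, e2, e3]

lemma halfplane_left_zero {H : ℂ → ℂ} {η : ℝ} (hη : 0 < η)
    (hd : DifferentiableOn ℂ H {z | z.re < η})
    (hO : (fun z => H (-z)) =O[infR] fun z => ‖z‖ ^ (-(3/2) : ℝ)) :
    Integrable (fun y : ℝ => H (y * I)) ∧ ∫ y : ℝ, H (y * I) = 0 := by
  have hd' : DifferentiableOn ℂ (fun z => H (-z)) {z | -η < z.re} := by
    refine hd.comp differentiableOn_id.neg ?_
    intro z hz
    simp only [Set.mem_ofPred_eq] at hz ⊢
    have : (-z).re < η := by rw [neg_re]; linarith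
    exact this
  have h1 := halfplane_integrable hη hd' hO
  have h2 := halfplane_integral_zero hη hd' hO
  have e : (fun y : ℝ => H (-(y * I))) = fun y : ℝ => (fun y : ℝ => H (y * I)) (-y) := by
    funext y; simp
  constructor
  · rw [e] at h1
    simpa using h1.comp_neg
  · rw [e] at h2
    rwa [integral_neg_eq_self (fun y : ℝ => H (y * I))] at h2

lemma inv_sub_bigO (c : ℂ) : (fun v : ℂ => (v - c)⁻¹) =O[infR] fun v => ‖v‖ ^ (-1 : ℝ) := by
  refine Asymptotics.IsBigO.mono ?_ inf_le_left
  refine Asymptotics.IsBigO.of_bound 2 ?_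
  rw [(Filter.hasBasis_cobounded_norm).eventually_iff]
  refine ⟨2 * ‖c‖ + 1, trivial, fun v hv => ?_⟩
  have hv' : 2 * ‖c‖ + 1 ≤ ‖v‖ := by simpa using hv
  have h1 : ‖v‖ / 2 ≤ ‖v - c‖ := by
    have := norm_sub_norm_le v c
    linarith
  have h0 : 0 < ‖v‖ := by linarith [norm_nonneg c]
  rw [norm_inv, Real.norm_of_nonneg (by positivity), Real.rpow_neg_one]
  calc ‖v - c‖⁻¹ ≤ (‖v‖ / 2)⁻¹ := by gcongr
    _ = 2 * ‖v‖⁻¹ := by field_simp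

lemma infR_ne_zero : ∀ᶠ v in infR, 1 ≤ ‖v‖ := by
  refine Filter.Eventually.filter_mono inf_le_left ?_
  rw [(Filter.hasBasis_cobounded_norm).eventually_iff]
  exact ⟨1, trivial, fun v hv => by simpa using hv⟩

lemma bigO_rpow_mul {f g : ℂ → ℂ} {p q r : ℝ} (hf : f =O[infR] fun v => ‖v‖ ^ p)
    (hg : g =O[infR] fun v => ‖v‖ ^ q) (h : p + q ≤ r) :
    (fun v => f v * g v) =O[infR] fun v => ‖v‖ ^ r := by
  refine (hf.mul hg).trans ?_
  refine Asymptotics.IsBigO.of_bound 1 ?_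
  filter_upwards [infR_ne_zero] with v hv
  have h0 : 0 < ‖v‖ := by linarith
  rw [← Real.rpow_add h0, Real.norm_of_nonneg (by positivity), Real.norm_of_nonneg (by positivity), one_mul]
  exact Real.rpow_le_rpow_of_exponent_le hv h

lemma const_bigO (c : ℂ) : (fun _ : ℂ => c) =O[infR] fun v => ‖v‖ ^ (0:ℝ) := by
  simpa using Asymptotics.isBigO_const_const c (one_ne_zero (α := ℝ)) infR

lemma bigO_rpow_mono {f : ℂ → ℂ} {p r : ℝ} (hf : f =O[infR] fun v => ‖v‖ ^ p) (h : p ≤ r) :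
    f =O[infR] fun v => ‖v‖ ^ r := by
  have := bigO_rpow_mul (g := fun _ => 1) (q := 0) hf (const_bigO 1) (r := r) (by simpa using h)
  simpa using this

lemma inv_sub_sq_bigO (c : ℂ) : (fun v : ℂ => ((v - c)^2)⁻¹) =O[infR] fun v => ‖v‖ ^ (-2 : ℝ) := by
  have := bigO_rpow_mul (inv_sub_bigO c) (inv_sub_bigO c) (r := -2) (by norm_num)
  refine this.congr_left fun v => ?_
  rw [sq, mul_inv]

lemma mul_I_sub_ne {b : ℝ} (hb : b ≠ 0) (y : ℝ) : (y * I - b : ℂ) ≠ 0 := by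
  intro h; have := congrArg Complex.re h; simp at this; exact hb this

lemma mul_I_add_ne {b : ℝ} (hb : b ≠ 0) (y : ℝ) : (y * I + b : ℂ) ≠ 0 := by
  intro h; have := congrArg Complex.re h; simp at this; exact hb this

lemma sq_add_sq_ne {b : ℝ} (hb : 0 < b) (y : ℝ) : ((y:ℂ)^2 + b^2 : ℂ) ≠ 0 := by
  have : (y^2 + b^2 : ℝ) ≠ 0 := by positivity
  exact_mod_cast this

lemma integrable_cauchy {b : ℝ} (hb : 0 < b) : Integrable (fun y : ℝ => (y^2 + b^2)⁻¹) := by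
  have := (integrable_inv_one_add_sq.comp_div hb.ne').const_mul (b^2)⁻¹
  refine this.congr (Filter.Eventually.of_forall fun y => ?_)
  simp only
  field_simp
  ring

lemma integral_cauchy {b : ℝ} (hb : 0 < b) : ∫ y : ℝ, (y^2 + b^2)⁻¹ = Real.pi / b := by
  have e : (fun y : ℝ => (y^2 + b^2)⁻¹) = fun y : ℝ => (b^2)⁻¹ * (fun x : ℝ => (1 + x^2)⁻¹) (y / b) := by
    funext y
    simp only
    field_simp
    ring
  rw [e, integral_const_mul, Measure.integral_comp_div (fun x : ℝ => (1 + x^2)⁻¹) b,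
    integral_univ_inv_one_add_sq, abs_of_pos hb, smul_eq_mul]
  field_simp

lemma integrable_cauchyC {b : ℝ} (hb : 0 < b) : Integrable (fun y : ℝ => ((y:ℂ)^2 + (b:ℂ)^2)⁻¹) := by
  have := (integrable_cauchy hb).ofReal (𝕜 := ℂ)
  simpa using this

lemma integral_cauchyC {b : ℝ} (hb : 0 < b) : ∫ y : ℝ, ((y:ℂ)^2 + (b:ℂ)^2)⁻¹ = Real.pi / b := by
  have := integral_ofReal (𝕜 := ℂ) (f := fun y : ℝ => (y^2 + b^2)⁻¹) (μ := volume)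
  rw [integral_cauchy hb] at this
  simpa using this

lemma mem_nhds_half {η : ℝ} (hη : 0 < η) {b : ℝ} (hb : 0 < b) : {z : ℂ | -η < z.re} ∈ 𝓝 (b : ℂ) :=
  (isOpen_lt continuous_const continuous_re).mem_nhds (by simp; linarith)

/-- Poisson formula. -/
lemma poisson_half {U : ℂ → ℂ} {η b : ℝ} (hη : 0 < η) (hb : 0 < b)
    (hd : DifferentiableOn ℂ U {z | -η < z.re})
    (hO : U =O[infR] fun z => ‖z‖ ^ (1/2 : ℝ)) :
    Integrable (fun y : ℝ => U (y * I) * ((y:ℂ)^2 + (b:ℂ)^2)⁻¹) ∧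
    ∫ y : ℝ, U (y * I) * ((y:ℂ)^2 + (b:ℂ)^2)⁻¹ = Real.pi / b * U b := by
  set H : ℂ → ℂ := fun v => dslope U b v * (-(v + b)⁻¹) with hH
  have hη' : 0 < min η b := lt_min hη hb
  have hHd : DifferentiableOn ℂ H {z | -(min η b) < z.re} := by
    refine DifferentiableOn.mul ?_ ?_
    · refine ((differentiableOn_dslope (mem_nhds_half hη hb)).mpr hd).mono ?_
      intro z hz
      simp only [Set.mem_ofPred_eq] at hz ⊢
      linarith [min_le_left η b]
    · refine (DifferentiableOn.inv (by fun_prop) ?_).neg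
      intro z hz h
      have := congrArg Complex.re h
      simp only [Set.mem_ofPred_eq] at hz
      simp at this
      linarith [min_le_right η b]
  have hHO : H =O[infR] fun z => ‖z‖ ^ (-(3/2) : ℝ) := by
    have h1 : (fun v => (U v - U b) * (v - b)⁻¹) =O[infR] fun z => ‖z‖ ^ (-(1/2) : ℝ) := by
      refine bigO_rpow_mul (p := 1/2) (q := -1) ?_ (inv_sub_bigO _) (by norm_num)
      exact hO.sub (bigO_rpow_mono (const_bigO (U b)) (by norm_num))
    have h2 : dslope U b =O[infR] fun z => ‖z‖ ^ (-(1/2) : ℝ) := by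
      refine h1.congr' ?_ Filter.EventuallyEq.rfl
      have : ∀ᶠ v in infR, v ≠ (b : ℂ) := by
        refine Filter.Eventually.filter_mono inf_le_left ?_
        rw [(Filter.hasBasis_cobounded_norm).eventually_iff]
        refine ⟨|b| + 1, trivial, fun v hv h => ?_⟩
        rw [h] at hv
        simp at hv
        linarith
      filter_upwards [this] with v hv
      rw [dslope_of_ne _ hv, slope_def_field, div_eq_mul_inv]
    refine bigO_rpow_mul h2 (q := -1) ?_ (by norm_num)
    have := (inv_sub_bigO (-b : ℂ)).neg_left
    simpa using this
  have hi := halfplane_integrable hη' hHd hHO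
  have hz := halfplane_integral_zero hη' hHd hHO
  have e : (fun y : ℝ => H (y * I)) = fun y : ℝ => U (y * I) * ((y:ℂ)^2 + (b:ℂ)^2)⁻¹ - U b * ((y:ℂ)^2 + (b:ℂ)^2)⁻¹ := by
    funext y
    have hne : (y * I : ℂ) ≠ b := fun h => mul_I_sub_ne hb.ne' y (sub_eq_zero.mpr h)
    simp only [hH]
    rw [dslope_of_ne _ hne, slope_def_field]
    have h1 := mul_I_sub_ne hb.ne' y
    have h2 := mul_I_add_ne hb.ne' y
    have h4 : ((y:ℂ)^2 + (b:ℂ)^2) = -((y * I - b) * (y * I + b)) := by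
      ring_nf; rw [I_sq]; ring
    rw [h4]
    field_simp
    ring
  rw [e] at hi hz
  have hc := (integrable_cauchyC hb).const_mul (U b)
  have hi2 : Integrable (fun y : ℝ => U (y * I) * ((y:ℂ)^2 + (b:ℂ)^2)⁻¹) := by
    refine (hi.add hc).congr (Filter.Eventually.of_forall fun y => ?_)
    simp
  refine ⟨hi2, ?_⟩
  rw [integral_sub hi2 hc, integral_const_mul, integral_cauchyC hb, sub_eq_zero] at hz
  rw [hz]; ring

lemma inv_sq_integral {b : ℝ} (hb : 0 < b) :
    Integrable (fun y : ℝ => ((y * I - b : ℂ)^2)⁻¹) ∧ ∫ y : ℝ, ((y * I - b : ℂ)^2)⁻¹ = 0 := by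
  refine halfplane_left_zero (H := fun z => ((z - b)^2)⁻¹) hb ?_ ?_
  · refine DifferentiableOn.inv (by fun_prop) ?_
    intro z hz h
    have h' : z - b = 0 := by simpa using h
    have := congrArg Complex.re h'
    simp only [Set.mem_ofPred_eq] at hz
    simp at this
    linarith
  · refine bigO_rpow_mono (p := -2) ?_ (by norm_num)
    have := inv_sub_sq_bigO (-b : ℂ)
    refine this.congr_left fun v => ?_
    congr 1; ring

lemma deriv_formula {P : ℂ → ℂ} {η b : ℝ} (hη : 0 < η) (hb : 0 < b)
    (hd : DifferentiableOn ℂ P {z | -η < z.re})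
    (hO : P =O[infR] fun z => ‖z‖ ^ (1/2 : ℝ)) :
    ∫ y : ℝ, P (y * I) * ((y * I - b : ℂ)^2)⁻¹ = - 2 * Real.pi * deriv P b := by
  set D := deriv P b with hD
  set Q : ℂ → ℂ := fun v => P v - P b - D * (2 * b) * ((v - b) * (v + b)⁻¹) with hQ
  have hη' : 0 < min η b := lt_min hη hb
  have hbC : (b : ℂ) ≠ 0 := by exact_mod_cast hb.ne'
  have hQd : DifferentiableOn ℂ Q {z | -(min η b) < z.re} := by
    refine DifferentiableOn.sub (DifferentiableOn.sub (hd.mono ?_) (by fun_prop)) ?_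
    · intro z hz
      simp only [Set.mem_ofPred_eq] at hz ⊢
      linarith [min_le_left η b]
    · refine DifferentiableOn.const_mul (DifferentiableOn.mul (by fun_prop) (DifferentiableOn.inv (by fun_prop) ?_)) _
      intro z hz h
      have := congrArg Complex.re h
      simp only [Set.mem_ofPred_eq] at hz
      simp at this
      linarith [min_le_right η b]
  have hQb : Q b = 0 := by simp [hQ]
  have hPd : HasDerivAt P D b := (hd.differentiableAt (mem_nhds_half hη hb)).hasDerivAt
  have hQ' : deriv Q b = 0 := by
    have h1 : HasDerivAt (fun v : ℂ => (v - b) * (v + b)⁻¹) (1 * ((b:ℂ) + b)⁻¹ + ((b:ℂ) - b) * (-1 / ((b:ℂ) + b)^2)) b := by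
      refine HasDerivAt.mul ((hasDerivAt_id _).sub_const _) ?_
      refine HasDerivAt.inv (c := fun v : ℂ => v + b) ((hasDerivAt_id _).add_const _) ?_
      simpa [← two_mul] using hbC
    have h2 := (hPd.sub_const (P b)).sub (h1.const_mul (D * (2 * b)))
    have h3 : deriv Q b = _ := h2.deriv
    rw [h3]
    field_simp
    ring
  have hm := mem_nhds_half hη' hb
  set H : ℂ → ℂ := dslope (dslope Q b) b with hH
  have hHd : DifferentiableOn ℂ H {z | -(min η b) < z.re} :=
    (differentiableOn_dslope hm).mpr ((differentiableOn_dslope hm).mpr hQd)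
  have hHe : ∀ v : ℂ, v ≠ b → H v = Q v * ((v - b)^2)⁻¹ := by
    intro v hv
    have : v - b ≠ 0 := sub_ne_zero.mpr hv
    simp only [hH]
    rw [dslope_of_ne _ hv, slope_def_field, dslope_of_ne _ hv, slope_def_field, dslope_same, hQ', hQb]
    field_simp
    ring
  have hHO : H =O[infR] fun z => ‖z‖ ^ (-(3/2) : ℝ) := by
    have h0 : (fun v => Q v) =O[infR] fun z => ‖z‖ ^ (1/2 : ℝ) := by
      refine (hO.sub (bigO_rpow_mono (const_bigO (P b)) (by norm_num))).sub ?_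
      have h3 : (fun v : ℂ => 1 - 2 * b * (v - (-b : ℂ))⁻¹) =O[infR] fun v => ‖v‖ ^ (1/2:ℝ) := by
        refine (bigO_rpow_mono (const_bigO 1) (by norm_num)).sub ?_
        exact bigO_rpow_mono ((inv_sub_bigO (-b)).const_mul_left _) (by norm_num)
      refine (h3.const_mul_left (D * (2 * b))).congr' ?_ Filter.EventuallyEq.rfl
      have : ∀ᶠ v : ℂ in infR, v + (b:ℂ) ≠ 0 := by
        refine Filter.Eventually.filter_mono inf_le_left ?_
        rw [(Filter.hasBasis_cobounded_norm).eventually_iff]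
        refine ⟨|b| + 1, trivial, fun v hv h => ?_⟩
        have h' : v = -b := by linear_combination h
        rw [h'] at hv
        simp at hv
        linarith
      filter_upwards [this] with v hv
      have : v - -(b:ℂ) ≠ 0 := by simpa using hv
      field_simp
      ring
    have h1 := bigO_rpow_mul h0 (inv_sub_sq_bigO (b:ℂ)) (r := -(3/2)) (by norm_num)
    refine h1.congr' ?_ Filter.EventuallyEq.rfl
    have : ∀ᶠ v in infR, v ≠ (b : ℂ) := by
      refine Filter.Eventually.filter_mono inf_le_left ?_
      rw [(Filter.hasBasis_cobounded_norm).eventually_iff]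
      refine ⟨|b| + 1, trivial, fun v hv h => ?_⟩
      rw [h] at hv
      simp at hv
      linarith
    filter_upwards [this] with v hv
    rw [hHe v hv]
  have hi := halfplane_integrable hη' hHd hHO
  have hz := halfplane_integral_zero hη' hHd hHO
  have e : (fun y : ℝ => H (y * I)) = fun y : ℝ => P (y * I) * ((y * I - b : ℂ)^2)⁻¹ -
      (P b * ((y * I - b : ℂ)^2)⁻¹ - D * (2 * b) * ((y:ℂ)^2 + (b:ℂ)^2)⁻¹) := by
    funext y
    have hne : (y * I : ℂ) ≠ b := fun h => mul_I_sub_ne hb.ne' y (sub_eq_zero.mpr h)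
    rw [hHe _ hne]
    have h1 := mul_I_sub_ne hb.ne' y
    have h2 := mul_I_add_ne hb.ne' y
    have h4 : ((y:ℂ)^2 + (b:ℂ)^2) = -((y * I - b) * (y * I + b)) := by
      ring_nf; rw [I_sq]; ring
    rw [h4]
    simp only [hQ]
    field_simp
    ring
  rw [e] at hi hz
  have hc1 := (inv_sq_integral hb).1.const_mul (P b)
  have hc2 := (integrable_cauchyC hb).const_mul (D * (2 * b))
  have hi2 : Integrable (fun y : ℝ => P (y * I) * ((y * I - b : ℂ)^2)⁻¹) := by
    refine (hi.add (hc1.sub hc2)).congr (Filter.Eventually.of_forall fun y => ?_)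
    simp
  have hc12 : Integrable (fun y : ℝ => P b * ((y * I - b : ℂ)^2)⁻¹ - D * (2 * b) * ((y:ℂ)^2 + (b:ℂ)^2)⁻¹) := hc1.sub hc2
  rw [integral_sub hi2 hc12, integral_sub hc1 hc2, integral_const_mul, integral_const_mul, (inv_sq_integral hb).2,
    integral_cauchyC hb, sub_eq_zero] at hz
  rw [hz]
  field_simp
  ring

/-- The kernel numerator `X^{2w} - X^w` with `l = log X`. -/
def qker (l : ℝ) (w : ℂ) : ℂ := cexp (2 * l * w) - cexp (l * w)

lemma qker_differentiable (l : ℝ) : Differentiable ℂ (qker l) := by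
  unfold qker; fun_prop

lemma qker_norm_le (l : ℝ) (w : ℂ) : ‖qker l w‖ ≤ Real.exp (2 * l * w.re) + Real.exp (l * w.re) := by
  unfold qker
  refine (norm_sub_le _ _).trans ?_
  rw [norm_exp, norm_exp]
  simp

lemma qker_conj (l : ℝ) (w : ℂ) : (starRingEnd ℂ) (qker l w) = qker l ((starRingEnd ℂ) w) := by
  unfold qker
  simp [← exp_conj, Complex.conj_ofNat]

lemma qker_norm_le_two {l : ℝ} (hl : 0 ≤ l) {w : ℂ} (hw : w.re ≤ 0) : ‖qker l w‖ ≤ 2 := by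
  refine (qker_norm_le l w).trans ?_
  have h1 : Real.exp (2 * l * w.re) ≤ 1 := Real.exp_le_one_iff.mpr (by nlinarith)
  have h2 : Real.exp (l * w.re) ≤ 1 := Real.exp_le_one_iff.mpr (by nlinarith)
  linarith

lemma main_analytic {G J U : ℂ → ℂ} {η b b₁ l : ℝ} (hη : 0 < η) (hb₁ : 0 < b₁) (hbb : b₁ ≤ b)
    (hl : 0 ≤ l)
    (hG : DifferentiableOn ℂ G {z | -η < z.re})
    (hGO : G =O[infR] fun z => ‖z‖ ^ (1/2 : ℝ))
    (hU : DifferentiableOn ℂ U {z | -η < z.re})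
    (hUO : U =O[infR] fun z => ‖z‖ ^ (1/2 : ℝ))
    (hJ : Differentiable ℂ J)
    (hJO : (fun z => J (-z)) =O[infR] fun z => ‖z‖ ^ (1/2 : ℝ))
    (hPO : (fun z => G z * qker l (z - b) + J z) =O[infR] fun z => ‖z‖ ^ (1/2 : ℝ))
    (hRe : ∀ y : ℝ, |(G (y * I)).re| ≤ (U (y * I)).re) :
    ‖deriv (fun z => G z * qker l (z - b) + J z) b‖ ≤
      (Real.exp (-2 * l * b) + Real.exp (-l * b)) / b₁ * (U b₁).re := by
  have hb : 0 < b := hb₁.trans_le hbb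
  have hq := qker_differentiable l
  set P : ℂ → ℂ := fun z => G z * qker l (z - b) + J z with hP
  have hPd : DifferentiableOn ℂ P {z | -η < z.re} := by
    refine DifferentiableOn.add (hG.mul ?_) hJ.differentiableOn
    exact (hq.comp (by fun_prop : Differentiable ℂ fun z : ℂ => z - b)).differentiableOn
  have f1 := deriv_formula hη hb hPd hPO
  -- J part
  have f2 := halfplane_left_zero (H := fun z => J z * ((z - b)^2)⁻¹) hb (by
    refine DifferentiableOn.mul hJ.differentiableOn (DifferentiableOn.inv (by fun_prop) ?_)
    intro z hz h
    have h' : z - b = 0 := by simpa using h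
    have := congrArg Complex.re h'
    simp only [Set.mem_ofPred_eq] at hz
    simp at this
    linarith) (by
    refine bigO_rpow_mul hJO (q := -2) ?_ (by norm_num)
    have := inv_sub_sq_bigO (-b : ℂ)
    refine this.congr_left fun v => ?_
    congr 1; ring)
  -- conj G part
  have hη' : 0 < min η b := lt_min hη hb
  have hH3d : DifferentiableOn ℂ (fun z => G z * (qker l (-z - b) * ((-z - b)^2)⁻¹))
      {z | -(min η b) < z.re} := by
    refine DifferentiableOn.mul (hG.mono ?_) (DifferentiableOn.mul ?_ (DifferentiableOn.inv (by fun_prop) ?_))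
    · intro z hz
      simp only [Set.mem_ofPred_eq] at hz ⊢
      linarith [min_le_left η b]
    · exact (hq.comp (by fun_prop : Differentiable ℂ fun z : ℂ => -z - b)).differentiableOn
    · intro z hz h
      have h' : -z - b = 0 := by simpa using h
      have := congrArg Complex.re h'
      simp only [Set.mem_ofPred_eq] at hz
      simp at this
      linarith [min_le_right η b]
  have hH3O : (fun z => G z * (qker l (-z - b) * ((-z - b)^2)⁻¹)) =O[infR] fun z => ‖z‖ ^ (-(3/2) : ℝ) := by
    refine bigO_rpow_mul hGO (q := -2) ?_ (by norm_num)
    refine bigO_rpow_mul (p := 0) (q := -2) ?_ ?_ (by norm_num)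
    · refine Asymptotics.IsBigO.of_bound 2 ?_
      rw [Filter.eventually_inf_principal]
      refine Filter.Eventually.of_forall fun z hz => ?_
      simp only [Set.mem_ofPred_eq] at hz
      simp only [Real.rpow_zero, norm_one, mul_one]
      exact qker_norm_le_two hl (by simp; linarith)
    · have := inv_sub_sq_bigO (-b : ℂ)
      refine this.congr_left fun v => ?_
      congr 1; ring
  have f3i := halfplane_integrable hη' hH3d hH3O
  have f3 := halfplane_integral_zero hη' hH3d hH3O
  -- rewrite
  set K : ℝ → ℂ := fun y => qker l (y * I - b) * ((y * I - b : ℂ)^2)⁻¹ with hK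
  have hKc : ∀ y : ℝ, (starRingEnd ℂ) (K y) = qker l (-(y * I) - b) * ((-(y * I) - b : ℂ)^2)⁻¹ := by
    intro y
    simp only [hK, map_mul, qker_conj, map_inv₀, map_pow, map_sub, conj_ofReal, conj_I]
    simp
  have hconj : ∫ y : ℝ, (starRingEnd ℂ) (G (y * I)) * K y = 0 := by
    have : ∀ y : ℝ, (starRingEnd ℂ) (G (y * I)) * K y =
        (starRingEnd ℂ) (G (y * I) * (qker l (-(y * I) - b) * ((-(y * I) - b : ℂ)^2)⁻¹)) := by
      intro y
      rw [← hKc]; simp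
    simp_rw [this]
    rw [integral_conj, f3, map_zero]
  have hconji : Integrable (fun y : ℝ => (starRingEnd ℂ) (G (y * I)) * K y) := by
    have : ∀ y : ℝ, (starRingEnd ℂ) (G (y * I)) * K y =
        (starRingEnd ℂ) (G (y * I) * (qker l (-(y * I) - b) * ((-(y * I) - b : ℂ)^2)⁻¹)) := by
      intro y
      rw [← hKc]; simp
    simp_rw [this]
    exact (LinearIsometryEquiv.integrable_comp_iff (φ := fun y : ℝ => G (y * I) * (qker l (-(y * I) - b) * ((-(y * I) - b : ℂ)^2)⁻¹)) (μ := volume) conjLIE).mpr f3i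
  have hKcont : Continuous K := by
    simp only [hK]
    refine Continuous.mul (hq.continuous.comp (by fun_prop)) (Continuous.inv₀ (by fun_prop) ?_)
    intro y
    exact pow_ne_zero _ (mul_I_sub_ne hb.ne' y)
  have hGcont : Continuous (fun y : ℝ => G (y * I)) := by
    refine hG.continuousOn.comp_continuous (by fun_prop) ?_
    intro y; simp [hη]
  have hGKi : Integrable (fun y : ℝ => G (y * I) * K y) := by
    refine (integrable_norm_iff (hGcont.mul hKcont).aestronglyMeasurable).mp ?_
    refine hconji.norm.congr (Filter.Eventually.of_forall fun y => ?_)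
    simp
  have hsum : ∫ y : ℝ, P (y * I) * ((y * I - b : ℂ)^2)⁻¹ = ∫ y : ℝ, (2 * (G (y * I)).re : ℂ) * K y := by
    have e1 : ∀ y : ℝ, P (y * I) * ((y * I - b : ℂ)^2)⁻¹ = G (y * I) * K y + J (y * I) * ((y * I - b : ℂ)^2)⁻¹ := by
      intro y; simp only [hP, hK]; ring
    have e2 : ∀ y : ℝ, (2 * (G (y * I)).re : ℂ) * K y = G (y * I) * K y + (starRingEnd ℂ) (G (y * I)) * K y := by
      intro y
      rw [← add_mul, add_conj]; simp
    simp_rw [e1, e2]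
    rw [integral_add hGKi f2.1, integral_add hGKi hconji, f2.2, hconj]
  -- the Poisson bound
  obtain ⟨g1, g2⟩ := poisson_half hη hb₁ hU hUO
  have g3 : ∫ y : ℝ, (U (y * I)).re * (y^2 + b₁^2)⁻¹ = Real.pi / b₁ * (U b₁).re := by
    have : ∀ y : ℝ, (U (y * I)).re * (y^2 + b₁^2)⁻¹ = (U (y * I) * ((y:ℂ)^2 + (b₁:ℂ)^2)⁻¹).re := by
      intro y
      have : ((y:ℂ)^2 + (b₁:ℂ)^2)⁻¹ = ((y^2 + b₁^2 : ℝ)⁻¹ : ℝ) := by push_cast; rfl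
      rw [this, re_mul_ofReal]
    simp_rw [this]
    have h := integral_re (𝕜 := ℂ) g1
    simp only [RCLike.re_to_complex] at h
    rw [h, g2]
    have : ((Real.pi : ℂ) / b₁) = ((Real.pi / b₁ : ℝ) : ℂ) := by push_cast; rfl
    rw [this, re_ofReal_mul]
  have g3i : Integrable (fun y : ℝ => (U (y * I)).re * (y^2 + b₁^2)⁻¹) := by
    have : ∀ y : ℝ, (U (y * I)).re * (y^2 + b₁^2)⁻¹ = (U (y * I) * ((y:ℂ)^2 + (b₁:ℂ)^2)⁻¹).re := by
      intro y
      have : ((y:ℂ)^2 + (b₁:ℂ)^2)⁻¹ = ((y^2 + b₁^2 : ℝ)⁻¹ : ℝ) := by push_cast; rfl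
      rw [this, re_mul_ofReal]
    simp_rw [this]
    exact g1.re
  set A := Real.exp (-2 * l * b) + Real.exp (-l * b) with hA
  have hbound : ‖∫ y : ℝ, (2 * (G (y * I)).re : ℂ) * K y‖ ≤ 2 * A * (Real.pi / b₁ * (U b₁).re) := by
    rw [← g3, ← integral_const_mul]
    refine norm_integral_le_of_norm_le (g3i.const_mul _) (Filter.Eventually.of_forall fun y => ?_)
    have k1 : ‖qker l (y * I - b)‖ ≤ A := by
      refine (qker_norm_le _ _).trans ?_
      simp [hA]
    have k2 : ‖(((y * I - b : ℂ)^2)⁻¹ : ℂ)‖ ≤ (y^2 + b₁^2)⁻¹ := by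
      rw [norm_inv, norm_pow, ← normSq_eq_norm_sq, normSq_apply]
      simp only [sub_re, mul_re, ofReal_re, I_re, ofReal_im, I_im, sub_im, mul_im]
      refine inv_anti₀ (by positivity) ?_
      ring_nf
      nlinarith
    have hA0 : 0 ≤ A := by positivity
    simp only [hK]
    rw [norm_mul, norm_mul, norm_mul, norm_real]
    simp only [Complex.norm_ofNat, Real.norm_eq_abs]
    calc 2 * |(G (y * I)).re| * (‖qker l (y * I - b)‖ * ‖(((y * I - b : ℂ)^2)⁻¹ : ℂ)‖)
        ≤ 2 * (U (y * I)).re * (A * (y^2 + b₁^2)⁻¹) := by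
          have := hRe y
          have h0 : 0 ≤ (U (y * I)).re := (abs_nonneg _).trans this
          gcongr
      _ = 2 * A * ((U (y * I)).re * (y ^ 2 + b₁ ^ 2)⁻¹) := by ring
  rw [← hsum, f1, norm_mul, norm_mul] at hbound
  simp only [norm_neg, Complex.norm_ofNat, norm_real, Real.norm_eq_abs, abs_of_pos Real.pi_pos] at hbound
  have hpi := Real.pi_pos
  have : 2 * Real.pi * ‖deriv P b‖ ≤ 2 * Real.pi * (A / b₁ * (U b₁).re) := by
    refine hbound.trans (le_of_eq ?_)
    ring
  exact le_of_mul_le_mul_left this (by positivity)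

lemma mellin_bounded {A : ℝ → ℂ} {K : ℝ} (hA : Measurable A) (hK : ∀ t, 1 < t → ‖A t‖ ≤ K) :
    DifferentiableOn ℂ (fun s : ℂ => ∫ t in Set.Ioi (1:ℝ), A t * (t:ℂ) ^ (-(s + 1))) {s | 0 < s.re} ∧
    ∀ s : ℂ, 0 < s.re → IntegrableOn (fun t : ℝ => A t * (t:ℂ) ^ (-(s + 1))) (Set.Ioi (1:ℝ)) ∧
      ‖∫ t in Set.Ioi (1:ℝ), A t * (t:ℂ) ^ (-(s + 1))‖ ≤ K / s.re := by
  have hK0 : 0 ≤ K := (norm_nonneg _).trans (hK 2 (by norm_num))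
  constructor
  · set B : ℝ → ℂ := Set.indicator (Set.Ioi 1) A with hB
    have hBm : Measurable B := hA.indicator measurableSet_Ioi
    have hBK : ∀ t, ‖B t‖ ≤ K := by
      intro t
      by_cases h : t ∈ Set.Ioi (1:ℝ)
      · rw [hB, Set.indicator_of_mem h]; exact hK t h
      · rw [hB, Set.indicator_of_notMem h]; simpa using hK0
    have heq : ∀ s : ℂ, ∫ t in Set.Ioi (1:ℝ), A t * (t:ℂ) ^ (-(s + 1)) = mellin B (-s) := by
      intro s
      have : ∀ t : ℝ, (t:ℂ) ^ (-s - 1) • B t =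
          (Set.Ioi (1:ℝ)).indicator (fun t : ℝ => A t * (t:ℂ) ^ (-(s + 1))) t := by
        intro t
        by_cases h : t ∈ Set.Ioi (1:ℝ)
        · rw [hB, Set.indicator_of_mem h, Set.indicator_of_mem h, smul_eq_mul, mul_comm]
          ring_nf
        · rw [hB, Set.indicator_of_notMem h, Set.indicator_of_notMem h, smul_zero]
      rw [mellin]
      simp_rw [this]
      rw [setIntegral_indicator measurableSet_Ioi]
      congr 2
      ext t; simp only [Set.mem_inter_iff, Set.mem_Ioi]
      constructor
      · intro h; exact ⟨by linarith, h⟩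
      · exact fun h => h.2
    simp_rw [heq]
    intro s hs
    have hs' : (-s).re < 0 := by simpa using hs
    have : DifferentiableAt ℂ (mellin B) (-s) := by
      refine mellin_differentiableAt_of_isBigO_rpow (a := 0) (b := (-s).re - 1) ?_ ?_ hs' ?_ (by linarith)
      · refine LocallyIntegrable.locallyIntegrableOn ?_ _
        intro x
        refine ⟨Set.Icc (x-1) (x+1), Icc_mem_nhds (by linarith) (by linarith), ?_⟩
        refine Measure.integrableOn_of_bounded (M := K) (by simp) hBm.aestronglyMeasurable ?_
        exact Eventually.of_forall hBK
      · refine Asymptotics.IsBigO.of_bound K (Eventually.of_forall fun t => ?_)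
        simpa using hBK t
      · refine Asymptotics.IsBigO.of_bound 1 ?_
        have : Set.Ioo (0:ℝ) 1 ∈ 𝓝[>] (0:ℝ) := Ioo_mem_nhdsGT zero_lt_one
        filter_upwards [this] with t ht
        have : B t = 0 := by
          rw [hB, Set.indicator_of_notMem]; simp; exact ht.2.le
        rw [this]; simp
    have h2 : DifferentiableAt ℂ (fun s => mellin B (-s)) s :=
      DifferentiableAt.comp s (g := mellin B) (f := fun s => -s) this (by fun_prop)
    exact h2.differentiableWithinAt
  · intro s hs
    have hmeas : AEStronglyMeasurable (fun t : ℝ => A t * (t:ℂ) ^ (-(s + 1)))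
        (volume.restrict (Set.Ioi (1:ℝ))) := by
      refine hA.aestronglyMeasurable.mul ?_
      refine ContinuousOn.aestronglyMeasurable ?_ measurableSet_Ioi
      intro t ht
      exact (continuousAt_ofReal_cpow_const _ _
        (Or.inr (zero_lt_one.trans ht).ne')).continuousWithinAt
    have hint : IntegrableOn (fun t : ℝ => K * t ^ (-(s.re + 1))) (Set.Ioi (1:ℝ)) :=
      (integrableOn_Ioi_rpow_of_lt (by linarith) zero_lt_one).const_mul _
    have hb : ∀ᵐ t ∂(volume.restrict (Set.Ioi (1:ℝ))), ‖A t * (t:ℂ) ^ (-(s + 1))‖ ≤ K * t ^ (-(s.re + 1)) := by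
      filter_upwards [ae_restrict_mem measurableSet_Ioi] with t ht
      rw [norm_mul, norm_cpow_eq_rpow_re_of_pos (zero_lt_one.trans ht)]
      simp only [neg_re, add_re, one_re]
      gcongr
      · exact Real.rpow_nonneg (zero_lt_one.trans ht).le _
      · exact hK t ht
    refine ⟨Integrable.mono' hint hmeas hb, ?_⟩
    refine (norm_integral_le_of_norm_le hint hb).trans ?_
    rw [integral_const_mul, integral_Ioi_rpow_of_lt (by linarith) zero_lt_one]
    simp
    rw [div_eq_mul_inv]

lemma char_sum_bound {M : ℕ} [NeZero M] {χ : DirichletCharacter ℂ M} (hχ : χ ≠ 1) (n : ℕ) :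
    ‖∑ k ∈ Finset.Icc 1 n, χ (k : ZMod M)‖ ≤ 2 * M := by
  have hblock : ∑ k ∈ Finset.range M, χ (k : ZMod M) = 0 := by
    rw [← MulChar.sum_eq_zero_of_ne_one hχ]
    refine Finset.sum_bij (fun k _ => (k : ZMod M)) (fun _ _ => Finset.mem_univ _) ?_ ?_ (fun _ _ => rfl)
    · intro a ha b hb h
      rw [ZMod.natCast_eq_natCast_iff'] at h
      rwa [Nat.mod_eq_of_lt (Finset.mem_range.mp ha), Nat.mod_eq_of_lt (Finset.mem_range.mp hb)] at h
    · intro b _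
      exact ⟨b.val, Finset.mem_range.mpr b.val_lt, ZMod.natCast_zmod_val b⟩
  have hM1 : (1:ℝ) ≤ M := by exact_mod_cast NeZero.one_le
  have hr : ∀ n : ℕ, ‖∑ k ∈ Finset.range n, χ (k : ZMod M)‖ ≤ M := by
    intro n
    induction n using Nat.strong_induction_on with
    | _ n ih =>
      by_cases h : n < M
      · refine (norm_sum_le _ _).trans ?_
        refine (Finset.sum_le_sum (fun k _ => χ.norm_le_one _)).trans ?_
        simp; exact_mod_cast h.le
      · obtain ⟨m, rfl⟩ := Nat.exists_eq_add_of_le (not_lt.mp h)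
        rw [Finset.sum_range_add, hblock, zero_add]
        have hpos : 0 < M := Nat.pos_of_ne_zero (NeZero.ne M)
        simpa using ih m (by omega)
  have h1 := hr (n+1)
  rw [Finset.range_eq_Ico, Finset.sum_eq_sum_Ico_succ_bot (by omega)] at h1
  have h2 : Finset.Ico (0+1) (n+1) = Finset.Icc 1 n := by ext; simp
  rw [h2] at h1
  have h3 := χ.norm_le_one ((0:ℕ) : ZMod M)
  have h4 : ∑ k ∈ Finset.Icc 1 n, χ (k : ZMod M) = (χ ((0:ℕ) : ZMod M) + ∑ k ∈ Finset.Icc 1 n, χ (k : ZMod M)) - χ ((0:ℕ) : ZMod M) := by ring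
  rw [h4]
  refine (norm_sub_le _ _).trans ?_
  linarith

lemma eqOn_right_half {f g : ℂ → ℂ} (hf : DifferentiableOn ℂ f {s | 0 < s.re})
    (hg : DifferentiableOn ℂ g {s | 0 < s.re}) (h : ∀ s : ℂ, 1 < s.re → f s = g s) :
    ∀ s : ℂ, 0 < s.re → f s = g s := by
  have ho : IsOpen {s : ℂ | 0 < s.re} := isOpen_lt continuous_const continuous_re
  have ho1 : IsOpen {s : ℂ | 1 < s.re} := isOpen_lt continuous_const continuous_re
  have := (hf.analyticOnNhd ho).eqOn_of_preconnected_of_eventuallyEq (hg.analyticOnNhd ho)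
    (convex_halfSpace_re_gt 0).isPreconnected (z₀ := 2) (by simp) (by
      filter_upwards [ho1.mem_nhds (x := 2) (by simp)] with s hs using h s hs)
  exact fun s hs => this hs

lemma LFunction_growth {M : ℕ} [NeZero M] {χ : DirichletCharacter ℂ M} (hχ : χ ≠ 1) {s : ℂ}
    (hs : 0 < s.re) : ‖LFunction χ s‖ ≤ ‖s‖ * (2 * M / s.re) := by
  set A : ℝ → ℂ := fun t => ∑ k ∈ Finset.Icc 1 ⌊t⌋₊, χ (k : ZMod M) with hA
  have hAm : Measurable A := by
    have : Measurable (fun n : ℕ => ∑ k ∈ Finset.Icc 1 n, χ (k : ZMod M)) := measurable_from_top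
    exact this.comp Nat.measurable_floor
  obtain ⟨hd, hb⟩ := mellin_bounded hAm (K := 2 * M) (fun t _ => char_sum_bound hχ _)
  have := eqOn_right_half (f := LFunction χ)
    (g := fun s => s * ∫ t in Set.Ioi (1:ℝ), A t * (t:ℂ) ^ (-(s + 1)))
    (differentiable_LFunction hχ).differentiableOn (differentiableOn_id.mul hd) (by
      intro s hs
      rw [LFunction_eq_LSeries χ hs, LSeries_eq_mul_integral _ le_rfl (by linarith)
        (LSeriesSummable_of_one_lt_re χ hs)]
      refine Asymptotics.IsBigO.of_bound (2 * M) (Eventually.of_forall fun n => ?_)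
      simpa using char_sum_bound hχ n)
  rw [this s hs, norm_mul]
  gcongr
  exact (hb s hs).2

lemma zeta_growth {s : ℂ} (hs : 0 < s.re) :
    ‖riemannZeta₁ s‖ ≤ ‖s‖ + ‖s - 1‖ * ‖s‖ * (1 / s.re) := by
  set A : ℝ → ℂ := fun t => (⌊t⌋₊ : ℂ) - t with hA
  have hAm : Measurable A := by
    have : Measurable (fun n : ℕ => (n : ℂ)) := measurable_from_top
    exact (this.comp Nat.measurable_floor).sub measurable_ofReal
  have hAb : ∀ t : ℝ, 1 < t → ‖A t‖ ≤ 1 := by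
    intro t ht
    have : A t = ((⌊t⌋₊ - t : ℝ) : ℂ) := by simp [hA]
    rw [this, norm_real, Real.norm_eq_abs, abs_le]
    have := Nat.floor_le (by linarith : 0 ≤ t)
    have := Nat.lt_floor_add_one t
    constructor <;> linarith
  obtain ⟨hd, hb⟩ := mellin_bounded hAm hAb
  have := eqOn_right_half (f := riemannZeta₁)
    (g := fun s => s + (s - 1) * s * ∫ t in Set.Ioi (1:ℝ), A t * (t:ℂ) ^ (-(s + 1)))
    differentiable_riemannZeta₁.differentiableOn
    (differentiableOn_id.add (((differentiableOn_id.sub_const 1).mul differentiableOn_id).mul hd)) (by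
      intro s hs
      have hs1 : s ≠ 1 := by rintro rfl; simp at hs
      have hs1' : s - 1 ≠ 0 := sub_ne_zero.mpr hs1
      have h1 := riemannZeta_eq_inv_sub_mul hs1
      have h2 : riemannZeta₁ s = (s - 1) * riemannZeta s := by rw [h1]; field_simp
      rw [h2, ← LSeries_one_eq_riemannZeta hs]
      have h3 := integral_Ioi_cpow_of_lt (a := -s) (by simpa using hs) zero_lt_one
      have h3i := integrableOn_Ioi_cpow_of_lt (a := -s) (by simpa using hs) zero_lt_one
      have hO : (fun n : ℕ => ∑ k ∈ Icc 1 n, (1 : ℕ → ℂ) k) =O[atTop] fun n : ℕ => (n : ℝ) ^ (1:ℝ) := by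
        refine Asymptotics.IsBigO.of_bound 1 (Eventually.of_forall fun n => ?_)
        simp
      rw [LSeries_eq_mul_integral 1 zero_le_one hs (LSeriesSummable_one_iff.mpr hs) hO]
      have h4 : ∫ t in Set.Ioi (1:ℝ), (∑ k ∈ Icc 1 ⌊t⌋₊, (1 : ℕ → ℂ) k) * (t:ℂ) ^ (-(s + 1)) =
          (∫ t in Set.Ioi (1:ℝ), A t * (t:ℂ) ^ (-(s + 1))) + ∫ t in Set.Ioi (1:ℝ), (t:ℂ) ^ (-s) := by
        rw [← integral_add (hb s (by linarith)).1 h3i]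
        refine setIntegral_congr_fun measurableSet_Ioi fun t ht => ?_
        have ht0 : (t:ℂ) ≠ 0 := by
          have : (0:ℝ) < t := zero_lt_one.trans (Set.mem_Ioi.mp ht)
          exact_mod_cast this.ne'
        have : (t:ℂ) ^ (-s) = t * (t:ℂ) ^ (-(s + 1)) := by
          rw [show -s = 1 + (-(s+1)) by ring, cpow_add _ _ ht0, cpow_one]
        simp only [this, hA]
        simp
        ring
      rw [h4, h3]
      have : -s + 1 ≠ 0 := by intro h; apply hs1'; linear_combination -h
      simp
      field_simp
      ring)
  rw [this s hs]
  refine (norm_add_le _ _).trans ?_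
  rw [norm_mul, norm_mul]
  gcongr
  exact (hb s hs).2

lemma L_two_lower {M : ℕ} [NeZero M] (χ : DirichletCharacter ℂ M) (u : ℝ) :
    1/4 ≤ ‖LFunction χ (2 + u * I)‖ := by
  set s : ℂ := 2 + u * I with hs
  have hre : s.re = 2 := by simp [hs]
  have h1 : 1 < s.re := by rw [hre]; norm_num
  rw [LFunction_eq_LSeries χ h1]
  set a : ℕ → ℂ := LSeries.term (fun n => χ n) s with ha
  have hsum : Summable a := LSeriesSummable_of_one_lt_re χ h1
  have hb : ∀ n, ‖a n‖ ≤ 1 / (n:ℝ)^2 := by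
    intro n
    rcases Nat.eq_zero_or_pos n with rfl | hn
    · simp [ha]
    · rw [ha, LSeries.term_of_ne_zero hn.ne', norm_div, norm_natCast_cpow_of_pos hn, hre]
      rw [show ((n:ℝ)^(2:ℝ)) = (n:ℝ)^2 by norm_cast]
      gcongr
      exact χ.norm_le_one _
  have hz := hasSum_zeta_two
  have e1 : LSeries (fun n => χ n) s = a 0 + a 1 + ∑' n, a (n+2) := by
    rw [LSeries, ← ha, ← hsum.sum_add_tsum_nat_add 2]
    simp [Finset.sum_range_succ]
  have e2 : Real.pi^2/6 = 1 + ∑' n : ℕ, 1 / ((n+2:ℕ):ℝ)^2 := by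
    rw [← hz.tsum_eq, ← hz.summable.sum_add_tsum_nat_add 2]
    simp [Finset.sum_range_succ]
  have hs2 : Summable (fun n : ℕ => 1 / ((n+2:ℕ):ℝ)^2) := (summable_nat_add_iff 2).mpr hz.summable
  have e3 : ‖∑' n, a (n+2)‖ ≤ ∑' n : ℕ, 1 / ((n+2:ℕ):ℝ)^2 :=
    tsum_of_norm_bounded hs2.hasSum (fun n => hb (n+2))
  have a0 : a 0 = 0 := by simp [ha]
  have a1 : a 1 = 1 := by simp [ha]
  have hpi : Real.pi < 3.15 := Real.pi_lt_d2
  have hpi2 : Real.pi^2/6 < 1.66 := by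
    have := Real.pi_pos
    nlinarith
  rw [e1, a0, a1, zero_add]
  have := norm_sub_norm_le (1:ℂ) (-∑' n, a (n+2))
  rw [norm_neg, norm_one, sub_neg_eq_add] at this
  linarith

/-- An entire completion of `L(s, χ)` (with the pole removed), with the properties needed. -/
structure LData {M : ℕ} [NeZero M] (χ : DirichletCharacter ℂ M) (f : ℂ → ℂ) (e : ℂ) : Prop where
  he : e = 0 ∨ e = 1
  diff : Differentiable ℂ f
  logDeriv : ∀ s : ℂ, s ≠ 1 → f s ≠ 0 →
    deriv f s / f s = deriv (LFunction χ) s / LFunction χ s + e / (s - 1)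
  zero : ∀ s : ℂ, 0 < s.re → f s = 0 → s.re = 1/2
  growth : ∀ s : ℂ, 1/10 ≤ s.re → ‖f s‖ ≤ 20 * M * (1 + ‖s‖)^2
  lower : ∀ u : ℝ, 1/4 ≤ ‖f (2 + u * I)‖

lemma exists_LData {M : ℕ} [NeZero M] (χ : DirichletCharacter ℂ M) (hprim : χ.IsPrimitive)
    (hgrh : ∀ s : ℂ, 0 < s.re → s.re < 1 → LFunction χ s = 0 → s.re = 1 / 2) :
    ∃ f e, LData χ f e := by
  have hM1 : (1:ℝ) ≤ M := by exact_mod_cast NeZero.one_le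
  by_cases hχ : χ = 1
  · have hM : M = 1 := by
      have h := hprim
      rw [isPrimitive_def, hχ, conductor_one] at h
      exact h.symm
    subst hM
    have hL : LFunction χ = riemannZeta := LFunction_modOne_eq
    have hf : ∀ s : ℂ, s ≠ 1 → riemannZeta₁ s = (s - 1) * riemannZeta s := by
      intro s hs
      have := sub_ne_zero.mpr hs
      rw [riemannZeta_eq_inv_sub_mul hs]; field_simp
    refine ⟨riemannZeta₁, 1, Or.inr rfl, differentiable_riemannZeta₁, ?_, ?_, ?_, ?_⟩
    · intro s hs hs0
      have hs1 := sub_ne_zero.mpr hs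
      rw [hL]
      have hz : riemannZeta s ≠ 0 := by
        intro h; apply hs0; rw [hf s hs, h, mul_zero]
      have hev : riemannZeta₁ =ᶠ[𝓝 s] fun s => (s - 1) * riemannZeta s := by
        filter_upwards [isOpen_ne.mem_nhds hs] with z hz using hf z hz
      have hd : HasDerivAt (fun s => (s - 1) * riemannZeta s) (1 * riemannZeta s + (s - 1) * deriv riemannZeta s) s :=
        ((hasDerivAt_id s).sub_const 1).mul (differentiableAt_riemannZeta hs).hasDerivAt
      rw [hev.deriv_eq, hd.deriv, hf s hs]
      field_simp
      ring
    · intro s hs h0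
      have hs1 : s ≠ 1 := by rintro rfl; simp at h0
      rw [hf s hs1, mul_eq_zero] at h0
      have h0 : LFunction χ s = 0 := by
        rw [hL]; exact h0.resolve_left (sub_ne_zero.mpr hs1)
      by_cases h1 : s.re < 1
      · exact hgrh s hs h1 h0
      · exact absurd h0 (LFunction_ne_zero_of_one_le_re χ (Or.inr hs1) (not_lt.mp h1))
    · intro s hs
      have hs0 : 0 < s.re := by linarith
      refine (zeta_growth hs0).trans ?_
      have h1 : 1 / s.re ≤ 10 := by rw [div_le_iff₀ hs0]; linarith
      have h2 : ‖s - 1‖ ≤ ‖s‖ + 1 := by simpa using norm_sub_le s 1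
      have h3 := norm_nonneg s
      have : ‖s - 1‖ * ‖s‖ * (1 / s.re) ≤ (‖s‖ + 1) * ‖s‖ * 10 := by gcongr
      push_cast
      nlinarith
    · intro u
      have hne : (2 + u * I : ℂ) ≠ 1 := by
        intro h; have := congrArg re h; simp at this
      rw [hf _ hne, norm_mul, ← hL]
      have h1 := L_two_lower χ u
      have h2 : 1 ≤ ‖(2 + u * I : ℂ) - 1‖ := by
        refine le_trans ?_ (abs_re_le_norm _)
        norm_num
      nlinarith
  · refine ⟨LFunction χ, 0, Or.inl rfl, differentiable_LFunction hχ, by simp, ?_, ?_, L_two_lower χ⟩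
    · intro s hs h0
      by_cases h1 : s.re < 1
      · exact hgrh s hs h1 h0
      · exact absurd h0 (LFunction_ne_zero_of_one_le_re χ (Or.inl hχ) (not_lt.mp h1))
    · intro s hs
      have hs0 : 0 < s.re := by linarith
      refine (LFunction_growth hχ hs0).trans ?_
      have h1 : 2 * M / s.re ≤ 20 * M := by rw [div_le_iff₀ hs0]; nlinarith
      have h3 := norm_nonneg s
      have : ‖s‖ * (2 * M / s.re) ≤ ‖s‖ * (20 * M) := by gcongr
      nlinarith [mul_nonneg h3 (by linarith : (0:ℝ) ≤ M), mul_nonneg (sq_nonneg ‖s‖) (by linarith : (0:ℝ) ≤ M)]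

lemma disc_base {g : ℂ → ℂ} {B : ℝ} (hg : Differentiable ℂ g)
    (hB : ∀ z : ℂ, ‖z‖ ≤ 19/10 → ‖g z‖ ≤ B) (h0 : ∀ z : ℂ, ‖z‖ ≤ 17/10 → g z ≠ 0)
    {w : ℂ} (hw : ‖w‖ ≤ 3/2) :
    ‖deriv g w / g w‖ ≤ 320 * (Real.log (B / ‖g 0‖) + 1) := by
  have hg0 : g 0 ≠ 0 := h0 0 (by norm_num)
  have hg0' : 0 < ‖g 0‖ := norm_pos_iff.mpr hg0
  have hB0 : ‖g 0‖ ≤ B := hB 0 (by norm_num)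
  have hL : 0 ≤ Real.log (B / ‖g 0‖) := Real.log_nonneg (by rwa [le_div_iff₀ hg0', one_mul])
  have hz : ∀ z ∈ Metric.ball (0:ℂ) (17/10), g z ≠ 0 := by
    intro z hz
    exact h0 z (mem_ball_zero_iff.mp hz).le
  have hd : DifferentiableOn ℂ (fun z => deriv g z / g z) (Metric.ball (0:ℂ) (17/10)) := by
    have h1 : Differentiable ℂ (deriv g) := by
      have := hg.contDiff (n := 2)
      exact (contDiff_succ_iff_deriv.mp (show ContDiff ℂ (1+1) g from by simpa [one_add_one_eq_two] using this)).2.2.differentiable (by norm_num)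
    exact h1.differentiableOn.div hg.differentiableOn hz
  obtain ⟨h, hh0, hh⟩ := hd.isExactOn_ball.with_val_at 0 0
  have hexp : ∀ z ∈ Metric.ball (0:ℂ) (17/10), g z = g 0 * cexp (h z) := by
    have hder : ∀ z ∈ Metric.ball (0:ℂ) (17/10),
        HasDerivAt (fun z => g z * cexp (-h z)) 0 z := by
      intro z hz'
      have h1 := (hg z).hasDerivAt.mul ((hh z hz').neg.cexp)
      have h3 := hz z hz'
      have h2 : 0 = deriv g z * cexp (-h z) + g z * (cexp (-h z) * -(deriv g z / g z)) := by
        field_simp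
        ring
      rw [h2]
      exact h1
    intro z hz'
    have hc := (convex_ball (0:ℂ) (17/10)).is_const_of_fderivWithin_eq_zero (𝕜 := ℂ)
      (f := fun z => g z * cexp (-h z))
      (fun x hx => (hder x hx).differentiableAt.differentiableWithinAt)
      (fun x hx => by
        rw [fderivWithin_of_isOpen Metric.isOpen_ball hx]
        have := (hder x hx).hasFDerivAt.fderiv
        rw [this]; ext; simp) hz' (Metric.mem_ball_self (by norm_num))
    simp only [hh0, neg_zero, Complex.exp_zero, mul_one] at hc
    rw [← hc, mul_assoc, ← Complex.exp_add]; simp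
  have hre : Set.MapsTo h (Metric.ball (0:ℂ) (17/10)) {z | z.re ≤ Real.log (B / ‖g 0‖) + 1} := by
    intro z hz'
    have h1 := hexp z hz'
    have h2 : ‖g z‖ ≤ B := hB z ((mem_ball_zero_iff.mp hz').le.trans (by norm_num))
    rw [h1, norm_mul, Complex.norm_exp] at h2
    have h3 : Real.exp (h z).re ≤ B / ‖g 0‖ := by rw [le_div_iff₀ hg0']; linarith
    have h4 := (Real.le_log_iff_exp_le (lt_of_lt_of_le (Real.exp_pos _) h3)).mpr h3
    show (h z).re ≤ _
    linarith
  have hhd : DifferentiableOn ℂ h (Metric.ball (0:ℂ) (17/10)) :=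
    fun z hz' => (hh z hz').differentiableAt.differentiableWithinAt
  have hsub : Metric.closedBall w (1/10) ⊆ Metric.ball (0:ℂ) (17/10) := by
    intro z hz'
    rw [mem_closedBall_iff_norm] at hz'
    rw [mem_ball_zero_iff]
    have := norm_add_le (z - w) w
    rw [sub_add_cancel] at this
    linarith
  have hwb : w ∈ Metric.ball (0:ℂ) (17/10) := hsub (Metric.mem_closedBall_self (by norm_num))
  have hder := norm_deriv_le_of_forall_mem_sphere_norm_le (f := h) (c := w) (R := 1/10)
    (C := 32 * (Real.log (B / ‖g 0‖) + 1)) (by norm_num)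
    (by
      apply DifferentiableOn.diffContOnCl
      rw [closure_ball _ (by norm_num)]
      exact hhd.mono hsub)
    (by
      intro z hz'
      have hzb := hsub (Metric.sphere_subset_closedBall hz')
      refine (borelCaratheodory_zero (by linarith) hhd hre (by norm_num) hzb hh0).trans ?_
      rw [mem_sphere_iff_norm] at hz'
      have := norm_add_le (z - w) w
      rw [sub_add_cancel] at this
      have hzn : ‖z‖ ≤ 16/10 := by linarith
      have := norm_nonneg z
      rw [div_le_iff₀ (by linarith)]
      nlinarith)
  rw [(hh w hwb).deriv] at hder
  linarith

lemma disc_step {f : ℂ → ℂ} {B : ℝ} (hf : Differentiable ℂ f)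
    (hB : ∀ z : ℂ, ‖z‖ ≤ 19/10 → ‖f z‖ ≤ B) (hf0 : f 0 ≠ 0) {ρ : ℂ} (hρ : ‖ρ‖ ≤ 17/10)
    (hfρ : f ρ = 0) :
    ∃ g : ℂ → ℂ, Differentiable ℂ g ∧ (∀ z : ℂ, ‖z‖ ≤ 19/10 → ‖g z‖ ≤ B) ∧
      ‖f 0‖ * (19/17) ≤ ‖g 0‖ ∧ (∀ z : ℂ, ‖z‖ ≤ 17/10 → g z = 0 → f z = 0) ∧
      ∀ w : ℂ, ‖w‖ ≤ 3/2 → f w ≠ 0 → g w ≠ 0 ∧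
        ‖deriv f w / f w - 1 / (w - ρ) - deriv g w / g w‖ ≤ 2 := by
  have hd : Differentiable ℂ (dslope f ρ) := by
    rw [← differentiableOn_univ, differentiableOn_dslope univ_mem, differentiableOn_univ]
    exact hf
  have hmul : ∀ z, (z - ρ) * dslope f ρ z = f z := by
    intro z
    have := sub_smul_dslope f ρ z
    rw [smul_eq_mul, hfρ, sub_zero] at this
    exact this
  set q : ℂ → ℂ := fun z => ((19/10)^2 - (starRingEnd ℂ) ρ * z) / (19/10) with hq
  have hqd : Differentiable ℂ q := by unfold q; fun_prop
  have hcρ : ‖(starRingEnd ℂ) ρ‖ = ‖ρ‖ := RCLike.norm_conj ρ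
  have hlow : ∀ z : ℂ, ‖z‖ ≤ 17/10 → 0 < ‖((19/10)^2 - (starRingEnd ℂ) ρ * z : ℂ)‖ := by
    intro z hz
    have h1 := norm_sub_norm_le ((19/10)^2 : ℂ) ((starRingEnd ℂ) ρ * z)
    have h2 : ‖((19/10)^2 : ℂ)‖ = (19/10)^2 := by norm_num
    rw [h2, norm_mul, hcρ] at h1
    have : ‖ρ‖ * ‖z‖ ≤ 17/10 * (17/10) := by gcongr
    linarith
  have hqne : ∀ z : ℂ, ‖z‖ ≤ 17/10 → q z ≠ 0 := by
    intro z hz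
    have := norm_pos_iff.mp (hlow z hz)
    simp only [hq]
    exact div_ne_zero this (by norm_num)
  have hgd : Differentiable ℂ (fun z => dslope f ρ z * q z) := hd.mul hqd
  refine ⟨fun z => dslope f ρ z * q z, hgd, ?_, ?_, ?_, ?_⟩
  · intro z hz
    refine norm_le_of_forall_mem_frontier_norm_le (U := Metric.ball (0:ℂ) (19/10)) Metric.isBounded_ball
      hgd.diffContOnCl ?_ ?_
    · intro y hy
      rw [frontier_ball _ (by norm_num), mem_sphere_zero_iff_norm] at hy
      have hy2 : (starRingEnd ℂ) y * y = (19/10)^2 := by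
        rw [mul_comm, mul_conj, normSq_eq_norm_sq, hy]; norm_num
      have : ‖q y‖ = ‖y - ρ‖ := by
        simp only [hq]
        rw [← hy2, ← sub_mul, ← map_sub, norm_div, norm_mul, hy, RCLike.norm_conj]
        norm_num
      rw [norm_mul, this, mul_comm, ← norm_mul, hmul]
      exact hB y hy.le
    · rw [closure_ball _ (by norm_num)]; simpa using hz
  · have hρ0 : ρ ≠ 0 := by rintro rfl; exact hf0 hfρ
    have hρ0' := norm_pos_iff.mpr hρ0
    have h1 := hmul 0
    rw [← h1]
    simp only [hq]
    rw [norm_mul, norm_mul]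
    simp
    norm_num
    nlinarith [norm_nonneg (dslope f ρ 0)]
  · intro z hz h
    have := (mul_eq_zero.mp h).resolve_right (hqne z hz)
    rw [← hmul, this, mul_zero]
  · intro w hw hfw
    have hw' : ‖w‖ ≤ 17/10 := by linarith
    have hds : dslope f ρ w ≠ 0 := by intro h; apply hfw; rw [← hmul, h, mul_zero]
    have hwρ : w - ρ ≠ 0 := by intro h; apply hfw; rw [← hmul, h, zero_mul]
    have hqw := hqne w hw'
    refine ⟨mul_ne_zero hds hqw, ?_⟩
    have hfd : deriv f w = dslope f ρ w + (w - ρ) * deriv (dslope f ρ) w := by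
      have : f = fun z => (z - ρ) * dslope f ρ z := by ext z; exact (hmul z).symm
      have h2 : HasDerivAt (fun z => (z - ρ) * dslope f ρ z)
        (1 * dslope f ρ w + (w - ρ) * deriv (dslope f ρ) w) w :=
        ((hasDerivAt_id w).sub_const ρ).mul (hd w).hasDerivAt
      rw [one_mul] at h2
      rw [← h2.deriv, ← this]
    have hqder : HasDerivAt q (-(starRingEnd ℂ) ρ / (19/10)) w := by
      have := (((hasDerivAt_id w).const_mul ((starRingEnd ℂ) ρ)).const_sub ((19/10)^2)).div_const (19/10)
      simpa using this
    have hgder : deriv (fun z => dslope f ρ z * q z) w =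
        deriv (dslope f ρ) w * q w + dslope f ρ w * (-(starRingEnd ℂ) ρ / (19/10)) :=
      ((hd w).hasDerivAt.mul hqder).deriv
    have key : deriv f w / f w - 1 / (w - ρ) - deriv (fun z => dslope f ρ z * q z) w / (dslope f ρ w * q w)
        = (starRingEnd ℂ) ρ / (19/10) / q w := by
      rw [hgder, hfd, ← hmul w]
      field_simp
      ring
    rw [key]
    have h1 := norm_sub_norm_le ((19/10)^2 : ℂ) ((starRingEnd ℂ) ρ * w)
    have h2 : ‖((19/10)^2 : ℂ)‖ = (19/10)^2 := by norm_num
    rw [h2, norm_mul, hcρ] at h1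
    have h3 : ‖ρ‖ * ‖w‖ ≤ 17/10 * (3/2) := by gcongr
    rw [norm_div, div_le_iff₀ (norm_pos_iff.mpr hqw)]
    simp only [hq]
    rw [norm_div, norm_div, hcρ]
    norm_num
    norm_num at h1
    linarith

lemma disc_induct (n : ℕ) : ∀ (f : ℂ → ℂ) (B : ℝ), Differentiable ℂ f →
    (∀ z : ℂ, ‖z‖ ≤ 19/10 → ‖f z‖ ≤ B) → f 0 ≠ 0 → B < ‖f 0‖ * (19/17)^n →
    ∃ ρs : Multiset ℂ, (∀ ρ ∈ ρs, f ρ = 0 ∧ ‖ρ‖ ≤ 17/10) ∧ Multiset.card ρs ≤ n ∧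
      ∀ w : ℂ, ‖w‖ ≤ 3/2 → f w ≠ 0 →
        ‖deriv f w / f w - (ρs.map (fun ρ => 1 / (w - ρ))).sum‖ ≤
          2 * n + 320 * (Real.log (B / ‖f 0‖) + 1) := by
  induction n with
  | zero =>
    intro f B hf hB hf0 h
    exfalso
    have := hB 0 (by norm_num)
    simp at h
    linarith
  | succ n ih =>
    intro f B hf hB hf0 h
    by_cases hz : ∃ ρ : ℂ, ‖ρ‖ ≤ 17/10 ∧ f ρ = 0
    · obtain ⟨ρ, hρ, hfρ⟩ := hz
      obtain ⟨g, hg, hgB, hg0, hgz, hgw⟩ := disc_step hf hB hf0 hρ hfρ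
      have hf0' := norm_pos_iff.mpr hf0
      have hg0' : 0 < ‖g 0‖ := by linarith
      obtain ⟨ρs, h1, h2, h3⟩ := ih g B hg hgB (norm_pos_iff.mp hg0') (by
        refine h.trans_le ?_
        rw [pow_succ, mul_comm ((19/17 : ℝ)^n), ← mul_assoc]
        gcongr)
      refine ⟨ρ ::ₘ ρs, ?_, ?_, ?_⟩
      · intro r hr
        rcases Multiset.mem_cons.mp hr with rfl | hr
        · exact ⟨hfρ, hρ⟩
        · exact ⟨hgz r (h1 r hr).2 (h1 r hr).1, (h1 r hr).2⟩
      · simpa using h2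
      · intro w hw hfw
        obtain ⟨hgw0, hgw1⟩ := hgw w hw hfw
        have h4 := h3 w hw hgw0
        have hB0 : ‖f 0‖ ≤ B := hB 0 (by norm_num)
        have h5 : Real.log (B / ‖g 0‖) ≤ Real.log (B / ‖f 0‖) := by
          have : ‖f 0‖ ≤ ‖g 0‖ := by linarith
          apply Real.log_le_log
          · apply div_pos (by linarith) hg0'
          · gcongr
            linarith
        rw [Multiset.map_cons, Multiset.sum_cons]
        have h6 : deriv f w / f w - (1 / (w - ρ) + (ρs.map (fun ρ => 1 / (w - ρ))).sum) =
            (deriv f w / f w - 1 / (w - ρ) - deriv g w / g w) +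
            (deriv g w / g w - (ρs.map (fun ρ => 1 / (w - ρ))).sum) := by ring
        rw [h6]
        refine (norm_add_le _ _).trans ?_
        push_cast
        linarith
    · push Not at hz
      refine ⟨0, by simp, by simp, ?_⟩
      intro w hw hfw
      have := disc_base hf hB hz hw
      simp only [Multiset.map_zero, Multiset.sum_zero, sub_zero]
      have : (0:ℝ) ≤ 2 * ((n+1 : ℕ) : ℝ) := by positivity
      linarith

lemma disc_final {f : ℂ → ℂ} {B : ℝ} (c : ℂ) (hf : Differentiable ℂ f)
    (hB : ∀ z : ℂ, ‖z - c‖ ≤ 19/10 → ‖f z‖ ≤ B) (hf0 : f c ≠ 0) :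
    ∃ ρs : Multiset ℂ, (∀ ρ ∈ ρs, f ρ = 0 ∧ ‖ρ - c‖ ≤ 17/10) ∧
      Multiset.card ρs ≤ 10 * Real.log (B / ‖f c‖) + 2 ∧
      ∀ w : ℂ, ‖w - c‖ ≤ 3/2 → f w ≠ 0 →
        ‖deriv f w / f w - (ρs.map (fun ρ => 1 / (w - ρ))).sum‖ ≤
          340 * Real.log (B / ‖f c‖) + 324 := by
  have hf0' := norm_pos_iff.mpr hf0
  have hBc : ‖f c‖ ≤ B := hB c (by norm_num)
  set L := Real.log (B / ‖f c‖) with hL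
  have hL0 : 0 ≤ L := Real.log_nonneg (by rwa [le_div_iff₀ hf0', one_mul])
  set n : ℕ := ⌊10 * L⌋₊ + 1 with hn
  have hn1 : (n:ℝ) ≤ 10 * L + 1 := by
    have := Nat.floor_le (by positivity : 0 ≤ 10 * L)
    rw [hn]; push_cast; linarith
  have hn2 : 10 * L < n := by
    have := Nat.lt_floor_add_one (10 * L)
    rw [hn]; push_cast; linarith
  obtain ⟨ρs, h1, h2, h3⟩ := disc_induct n (fun z => f (c + z)) B (by fun_prop)
    (fun z hz => hB _ (by simpa using hz)) (by simpa using hf0) (by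
      simp only [add_zero]
      have hl : 1/10 ≤ Real.log (19/17) := by
        have := Real.one_sub_inv_le_log_of_pos (x := 19/17) (by norm_num)
        norm_num at this
        linarith
      have : L < Real.log ((19/17)^n) := by
        rw [Real.log_pow]
        have : (n:ℝ) * (1/10) ≤ n * Real.log (19/17) := by gcongr
        linarith
      have := (Real.log_lt_log_iff (div_pos (by linarith) hf0') (by positivity)).mp this
      rw [div_lt_iff₀ hf0'] at this
      linarith)
  simp only [add_zero] at h3
  refine ⟨ρs.map (fun ρ => c + ρ), ?_, ?_, ?_⟩
  · intro ρ hρ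
    obtain ⟨r, hr, rfl⟩ := Multiset.mem_map.mp hρ
    have := h1 r hr
    simpa using this
  · rw [Multiset.card_map]
    have : (Multiset.card ρs : ℝ) ≤ n := by exact_mod_cast h2
    linarith
  · intro w hw hfw
    have := h3 (w - c) hw (by simpa using hfw)
    rw [deriv_comp_const_add] at this
    simp only [add_sub_cancel] at this
    rw [Multiset.map_map]
    have h4 : ((fun ρ => 1 / (w - ρ)) ∘ fun ρ => c + ρ) = fun ρ => 1 / (w - c - ρ) := by
      ext r; simp only [Function.comp]; ring_nf
    rw [h4]
    refine this.trans ?_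
    linarith

/-- `∑ Λ(n) / n²`. -/
def clam : ℝ := ∑' n : ℕ, ArithmeticFunction.vonMangoldt n / (n:ℝ)^2

lemma clam_summable : Summable (fun n : ℕ => ArithmeticFunction.vonMangoldt n / (n:ℝ)^2) := by
  have h := ArithmeticFunction.LSeriesSummable_vonMangoldt (s := 2) (by simp)
  refine h.norm.congr ?_
  intro n
  rcases Nat.eq_zero_or_pos n with rfl | hn
  · simp
  · rw [LSeries.term_of_ne_zero hn.ne', norm_div, norm_natCast_cpow_of_pos hn]
    simp [abs_of_nonneg ArithmeticFunction.vonMangoldt_nonneg]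

lemma clam_nonneg : 0 ≤ clam :=
  tsum_nonneg fun n => div_nonneg ArithmeticFunction.vonMangoldt_nonneg (by positivity)

lemma logDeriv_tail {M : ℕ} [NeZero M] (χ : DirichletCharacter ℂ M) {z : ℂ} (hz : 2 ≤ z.re)
    {Y : ℝ} (hY : 1 ≤ Y) :
    ‖deriv (LFunction χ) z / LFunction χ z + ∑ m ∈ Finset.Icc 1 ⌊Y⌋₊,
      (ArithmeticFunction.vonMangoldt m : ℂ) * χ (m : ZMod M) * (m:ℂ) ^ (-z)‖
      ≤ Y ^ (-(z.re - 2)) * clam := by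
  have hz1 : 1 < z.re := by linarith
  have hF : deriv (LFunction χ) z / LFunction χ z =
      -LSeries (fun n => χ n * ArithmeticFunction.vonMangoldt n) z := by
    rw [deriv_LFunction_eq_deriv_LSeries χ hz1, LFunction_eq_LSeries χ hz1]
    have := LSeries_twist_vonMangoldt_eq χ hz1
    rw [show (fun n : ℕ => χ n * (ArithmeticFunction.vonMangoldt n : ℂ)) =
      ((fun n : ℕ => χ n) * fun n : ℕ => (ArithmeticFunction.vonMangoldt n : ℂ)) from rfl, this]
    ring
  set a : ℕ → ℂ := LSeries.term (fun n => χ n * ArithmeticFunction.vonMangoldt n) z with ha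
  have hsum : Summable a :=
    LSeriesSummable_mul χ (ArithmeticFunction.LSeriesSummable_vonMangoldt hz1)
  set N := ⌊Y⌋₊ + 1 with hN
  have hsp := hsum.sum_add_tsum_nat_add N
  have hI : ∑ i ∈ Finset.range N, a i = ∑ m ∈ Finset.Icc 1 ⌊Y⌋₊,
      (ArithmeticFunction.vonMangoldt m : ℂ) * χ (m : ZMod M) * (m:ℂ) ^ (-z) := by
    rw [Finset.range_eq_Ico, Finset.sum_eq_sum_Ico_succ_bot (by omega)]
    have h2 : Finset.Ico (0+1) N = Finset.Icc 1 ⌊Y⌋₊ := by ext; simp [hN]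
    rw [h2, ha, LSeries.term_zero, zero_add]
    refine Finset.sum_congr rfl fun m hm => ?_
    have hm1 : m ≠ 0 := by have := (Finset.mem_Icc.mp hm).1; omega
    rw [LSeries.term_of_ne_zero hm1, cpow_neg]
    ring
  have hb : ∀ n, ‖a (n+N)‖ ≤ Y ^ (-(z.re - 2)) *
      (ArithmeticFunction.vonMangoldt (n+N) / ((n+N : ℕ):ℝ)^2) := by
    intro n
    have hnpos : 0 < n + N := by omega
    have hnpos' : (0:ℝ) < ((n+N : ℕ) : ℝ) := by exact_mod_cast hnpos
    have hYn : Y ≤ ((n+N : ℕ) : ℝ) := by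
      have := Nat.lt_floor_add_one Y
      rw [hN]; push_cast
      have : (0:ℝ) ≤ n := by positivity
      linarith
    rw [ha, LSeries.term_of_ne_zero hnpos.ne', norm_div, norm_natCast_cpow_of_pos hnpos, norm_mul]
    have h1 : ‖(ArithmeticFunction.vonMangoldt (n+N) : ℂ)‖ = ArithmeticFunction.vonMangoldt (n+N) := by
      simp [abs_of_nonneg ArithmeticFunction.vonMangoldt_nonneg]
    rw [h1]
    have h2 : ((n+N : ℕ):ℝ) ^ z.re = ((n+N : ℕ):ℝ) ^ (z.re - 2) * ((n+N : ℕ):ℝ)^2 := by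
      rw [← Real.rpow_natCast, ← Real.rpow_add hnpos']
      congr 1; push_cast; ring
    have h3 : Y ^ (z.re - 2) ≤ ((n+N : ℕ):ℝ) ^ (z.re - 2) :=
      Real.rpow_le_rpow (by linarith) hYn (by linarith)
    have h4 : 0 < Y ^ (z.re - 2) := Real.rpow_pos_of_pos (by linarith) _
    rw [h2, Real.rpow_neg (by linarith)]
    have h5 := χ.norm_le_one ((n+N : ℕ) : ZMod M)
    have h6 : (0:ℝ) ≤ ArithmeticFunction.vonMangoldt (n+N) := ArithmeticFunction.vonMangoldt_nonneg
    calc _ ≤ 1 * ArithmeticFunction.vonMangoldt (n+N) / (Y ^ (z.re - 2) * ((n+N : ℕ):ℝ)^2) := by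
          gcongr
      _ = _ := by field_simp
  have hbs : Summable (fun n : ℕ => ArithmeticFunction.vonMangoldt (n+N) / ((n+N : ℕ):ℝ)^2) :=
    (summable_nat_add_iff N).mpr clam_summable
  have ht := tsum_of_norm_bounded (hbs.mul_left (Y ^ (-(z.re - 2)))).hasSum hb
  rw [tsum_mul_left] at ht
  have hle : ∑' n : ℕ, ArithmeticFunction.vonMangoldt (n+N) / ((n+N : ℕ):ℝ)^2 ≤ clam := by
    have := clam_summable.sum_add_tsum_nat_add N
    have h0 : 0 ≤ ∑ n ∈ Finset.range N, ArithmeticFunction.vonMangoldt n / (n:ℝ)^2 :=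
      Finset.sum_nonneg fun n _ => div_nonneg ArithmeticFunction.vonMangoldt_nonneg (by positivity)
    rw [clam]
    linarith
  have hfin : deriv (LFunction χ) z / LFunction χ z + ∑ m ∈ Finset.Icc 1 ⌊Y⌋₊,
      (ArithmeticFunction.vonMangoldt m : ℂ) * χ (m : ZMod M) * (m:ℂ) ^ (-z) = -∑' n, a (n+N) := by
    rw [hF, LSeries, ← ha, ← hsp, hI]; ring
  rw [hfin, norm_neg]
  refine ht.trans ?_
  have : 0 ≤ Y ^ (-(z.re - 2)) := Real.rpow_nonneg (by linarith) _
  gcongr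

/-- absolute constant -/
def B0 : ℝ := 5000 + 2 * (clam + 1)

lemma G_bounds {M : ℕ} [NeZero M] {χ : DirichletCharacter ℂ M} {f : ℂ → ℂ} {e : ℂ}
    (h : LData χ f e) {w : ℂ} (hw : 1/2 < w.re) :
    -(B0 * Real.log (M * (2 + |w.im|))) ≤ (deriv f w / f w).re ∧
    ‖deriv f w / f w‖ ≤ B0 * Real.log (M * (2 + |w.im|)) * (1 + 1 / (w.re - 1/2)) := by
  have hM1 : (1:ℝ) ≤ M := by exact_mod_cast NeZero.one_le
  set u := w.im with hu
  have hu0 := abs_nonneg u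
  set ℓ := Real.log (M * (2 + |u|)) with hℓ
  have hx2 : 2 ≤ M * (2 + |u|) := by nlinarith
  have hℓ2 : Real.log 2 ≤ ℓ := Real.log_le_log (by norm_num) hx2
  have hlog2 := Real.log_two_gt_d9
  have hcl := clam_nonneg
  have hfw : f w ≠ 0 := by
    intro h0
    have := h.zero w (by linarith) h0
    linarith
  have hpos : 0 < 1 / (w.re - 1/2) := by apply one_div_pos.mpr; linarith
  by_cases hwr : w.re ≤ 7/2
  · set c : ℂ := 2 + u * I with hc
    have hcl4 := h.lower u
    rw [← hc] at hcl4
    have hfc : f c ≠ 0 := by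
      intro h0; rw [h0] at hcl4; norm_num at hcl4
    have hcre : c.re = 2 := by simp [hc]
    have hcim : c.im = u := by simp [hc]
    obtain ⟨ρs, h1, h2, h3⟩ := disc_final (B := 125 * M * (2 + |u|)^2) c h.diff (by
      intro z hz
      have hre := (abs_re_le_norm (z - c)).trans hz
      rw [sub_re, hcre, abs_le] at hre
      refine (h.growth z (by linarith)).trans ?_
      have hcn : ‖c‖ ≤ 2 + |u| := by
        refine (norm_add_le _ _).trans ?_
        simp
      have hzn : ‖z‖ ≤ 19/10 + (2 + |u|) := by
        have := norm_add_le (z - c) c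
        rw [sub_add_cancel] at this
        linarith
      have : 1 + ‖z‖ ≤ 5/2 * (2 + |u|) := by linarith
      calc 20 * (M:ℝ) * (1 + ‖z‖)^2 ≤ 20 * M * (5/2 * (2 + |u|))^2 := by gcongr
        _ = _ := by ring) hfc
    set L := Real.log (125 * M * (2 + |u|)^2 / ‖f c‖) with hL
    have hLb : L ≤ 11 * ℓ := by
      have : 125 * M * (2 + |u|)^2 / ‖f c‖ ≤ 512 * (M * (2 + |u|))^2 := by
        rw [div_le_iff₀ (by linarith)]
        have : (M:ℝ) ≤ M^2 := by nlinarith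
        calc 125 * M * (2 + |u|)^2 ≤ 125 * M^2 * (2 + |u|)^2 := by gcongr
          _ ≤ 512 * (M * (2 + |u|))^2 * (1/4) := by nlinarith [sq_nonneg ((M:ℝ) * (2 + |u|))]
          _ ≤ _ := by gcongr
      refine (Real.log_le_log (div_pos (by positivity) (by linarith)) this).trans ?_
      rw [Real.log_mul (by norm_num) (by positivity), Real.log_pow,
        show (512:ℝ) = 2^9 by norm_num, Real.log_pow]
      push_cast
      linarith
    have hwc : ‖w - c‖ ≤ 3/2 := by
      have : w - c = ((w.re - 2 : ℝ) : ℂ) := by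
        apply Complex.ext <;> simp [hc, hu]
      rw [this, norm_real, Real.norm_eq_abs, abs_le]
      constructor <;> linarith
    have h4 := h3 w hwc hfw
    set S := (ρs.map (fun ρ => 1 / (w - ρ))).sum with hS
    have hρ : ∀ ρ ∈ ρs, ρ.re = 1/2 := by
      intro ρ hρ
      refine h.zero ρ ?_ (h1 ρ hρ).1
      have hre := (abs_re_le_norm (ρ - c)).trans (h1 ρ hρ).2
      rw [sub_re, hcre, abs_le] at hre
      linarith
    have hSre : 0 ≤ S.re := by
      have : S.re = (ρs.map (fun ρ => (1 / (w - ρ)).re)).sum := by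
        rw [hS, show ∀ z : ℂ, z.re = Complex.reAddGroupHom z from fun _ => rfl, map_multiset_sum,
          Multiset.map_map]; rfl
      rw [this]
      refine Multiset.sum_nonneg ?_
      intro x hx
      obtain ⟨ρ, hρm, rfl⟩ := Multiset.mem_map.mp hx
      rw [one_div, inv_re, sub_re, hρ ρ hρm]
      exact div_nonneg (by linarith) (normSq_nonneg _)
    have hSn : ‖S‖ ≤ (10 * L + 2) * (1 / (w.re - 1/2)) := by
      have : ‖S‖ ≤ (ρs.map (fun ρ => ‖1 / (w - ρ)‖)).sum := by
        rw [hS]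
        refine (norm_multiset_sum_le _).trans ?_
        rw [Multiset.map_map]; rfl
      refine this.trans ?_
      have h5 : (ρs.map (fun ρ => ‖1 / (w - ρ)‖)).sum ≤
          Multiset.card (ρs.map (fun ρ => ‖1 / (w - ρ)‖)) • (1 / (w.re - 1/2)) := by
        refine Multiset.sum_le_card_nsmul _ _ ?_
        intro x hx
        obtain ⟨ρ, hρm, rfl⟩ := Multiset.mem_map.mp hx
        rw [norm_div, norm_one]
        have h6 : w.re - 1/2 ≤ ‖w - ρ‖ := by
          have := (le_abs_self _).trans (abs_re_le_norm (w - ρ))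
          rwa [sub_re, hρ ρ hρm] at this
        exact one_div_le_one_div_of_le (by linarith) h6
      refine h5.trans ?_
      rw [Multiset.card_map, nsmul_eq_mul]
      gcongr
    have hB0 : 5000 ≤ B0 := by unfold B0; linarith
    have hEr : 340 * L + 324 ≤ 5000 * ℓ := by linarith
    have hB0l : 5000 * ℓ ≤ B0 * ℓ := by gcongr; linarith
    constructor
    · have h7 := (abs_le.mp ((abs_re_le_norm _).trans h4)).1
      rw [sub_re] at h7
      linarith
    · have h8 : ‖deriv f w / f w‖ ≤ ‖deriv f w / f w - S‖ + ‖S‖ := by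
        have := norm_add_le (deriv f w / f w - S) S
        rwa [sub_add_cancel] at this
      have h9 : (10 * L + 2) * (1 / (w.re - 1/2)) ≤ (B0 * ℓ) * (1 / (w.re - 1/2)) := by
        gcongr
        linarith
      linarith
  · push Not at hwr
    have hw1 : w ≠ 1 := by
      rintro rfl; norm_num at hwr
    have h1 := h.logDeriv w hw1 hfw
    have h2 := logDeriv_tail χ (z := w) (by linarith) (Y := 1) le_rfl
    simp at h2
    have h3 : ‖e / (w - 1)‖ ≤ 1 := by
      have h5 : 1 ≤ ‖w - 1‖ := by
        have := (le_abs_self _).trans (abs_re_le_norm (w - 1))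
        rw [sub_re, one_re] at this
        linarith
      rcases h.he with rfl | rfl
      · simp
      · rw [norm_div, norm_one, div_le_one (by linarith)]; exact h5
    have h4 : ‖deriv f w / f w‖ ≤ clam + 1 := by
      rw [h1]; exact (norm_add_le _ _).trans (by simpa using add_le_add h2 h3)
    have h5 : clam + 1 ≤ B0 * ℓ := by
      unfold B0
      nlinarith
    have h6 := (abs_le.mp ((abs_re_le_norm (deriv f w / f w)).trans h4)).1
    constructor
    · linarith
    · have : 0 ≤ B0 * ℓ * (1 / (w.re - 1/2)) := by
        apply mul_nonneg _ hpos.le; linarith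
      linarith

lemma infR_large (R : ℝ) : ∀ᶠ v in infR, R ≤ ‖v‖ ∧ 0 ≤ v.re := by
  rw [Filter.eventually_inf_principal]
  rw [(Filter.hasBasis_cobounded_norm).eventually_iff]
  exact ⟨R, trivial, fun v hv h => ⟨by simpa using hv, h⟩⟩

/-- `∑_{m ≤ Y} Λ(m) χ(m) m^{-z}`. -/
def Ssum {M : ℕ} (χ : DirichletCharacter ℂ M) (Y : ℝ) (z : ℂ) : ℂ :=
  ∑ m ∈ Finset.Icc 1 ⌊Y⌋₊, (ArithmeticFunction.vonMangoldt m : ℂ) * χ (m : ZMod M) * (m:ℂ) ^ (-z)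

lemma Ssum_differentiable {M : ℕ} (χ : DirichletCharacter ℂ M) (Y : ℝ) :
    Differentiable ℂ (Ssum χ Y) := by
  unfold Ssum
  refine Differentiable.fun_sum fun m hm => ?_
  have hm0 : (m:ℂ) ≠ 0 := by
    have := (Finset.mem_Icc.mp hm).1
    exact_mod_cast (by omega : m ≠ 0)
  refine Differentiable.const_mul ?_ _
  intro z
  exact (differentiableAt_id.neg).const_cpow (Or.inl hm0)

lemma Ssum_hasDerivAt {M : ℕ} (χ : DirichletCharacter ℂ M) (Y : ℝ) (z : ℂ) :
    HasDerivAt (Ssum χ Y) (∑ m ∈ Finset.Icc 1 ⌊Y⌋₊,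
      (ArithmeticFunction.vonMangoldt m : ℂ) * χ (m : ZMod M) * (m:ℂ) ^ (-z) * (-(Real.log m : ℂ))) z := by
  unfold Ssum
  refine HasDerivAt.fun_sum fun m hm => ?_
  have hm0 : (m:ℂ) ≠ 0 := by
    have := (Finset.mem_Icc.mp hm).1
    exact_mod_cast (by omega : m ≠ 0)
  have h1 := (((hasDerivAt_id z).neg).const_cpow (c := (m:ℂ)) (Or.inl hm0)).const_mul
    ((ArithmeticFunction.vonMangoldt m : ℂ) * χ (m : ZMod M))
  refine h1.congr_deriv ?_
  rw [← natCast_log]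
  simp only [Pi.neg_apply, id_eq]
  ring

lemma Ssum_exp_bound {M : ℕ} (χ : DirichletCharacter ℂ M) (k : ℝ) (p b : ℂ) :
    ∃ K : ℝ, ∀ v : ℂ, v.re ≤ 3 → ‖Ssum χ (Real.exp k) (p + v) * cexp (k * (v - b))‖ ≤ K := by
  refine ⟨∑ m ∈ Finset.Icc 1 ⌊Real.exp k⌋₊,
    ‖(ArithmeticFunction.vonMangoldt m : ℂ)‖ * ‖(m:ℂ) ^ (-p)‖ * (Real.exp (3 * (k - Real.log m)) * ‖cexp (-(k * b))‖), ?_⟩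
  intro v hv
  unfold Ssum
  rw [Finset.sum_mul]
  refine norm_sum_le_of_le _ fun m hm => ?_
  obtain ⟨hm1, hm2⟩ := Finset.mem_Icc.mp hm
  have hm0 : (m:ℂ) ≠ 0 := by exact_mod_cast (by omega : m ≠ 0)
  have hmpos : (0:ℝ) < m := by exact_mod_cast hm1
  have hmk : Real.log m ≤ k := by
    rw [Real.log_le_iff_le_exp hmpos]
    exact (Nat.le_floor_iff (Real.exp_pos k).le).mp hm2
  have e1 : (m:ℂ) ^ (-(p + v)) = (m:ℂ) ^ (-p) * cexp (-(Real.log m * v)) := by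
    rw [neg_add, cpow_add _ _ hm0, cpow_def_of_ne_zero hm0 (-v), natCast_log]
    congr 2; ring
  have e2 : cexp (k * (v - b)) = cexp (k * v) * cexp (-(k * b)) := by
    rw [← Complex.exp_add]; congr 1; ring
  have e3 : (ArithmeticFunction.vonMangoldt m : ℂ) * χ (m : ZMod M) * (m:ℂ) ^ (-(p + v)) * cexp (k * (v - b))
      = (ArithmeticFunction.vonMangoldt m : ℂ) * χ (m : ZMod M) * (m:ℂ) ^ (-p) *
        (cexp ((k - Real.log m : ℝ) * v) * cexp (-(k * b))) := by
    have : cexp ((k - Real.log m : ℝ) * v) = cexp (k * v) * cexp (-(Real.log m * v)) := by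
      rw [← Complex.exp_add]; congr 1; push_cast; ring
    rw [e1, e2, this]; ring
  rw [e3, norm_mul, norm_mul, norm_mul, norm_mul, Complex.norm_exp ((k - Real.log m : ℝ) * v)]
  have e4 : (((k - Real.log m : ℝ) : ℂ) * v).re = (k - Real.log m) * v.re := by
    rw [re_ofReal_mul]
  rw [e4]
  have h5 := χ.norm_le_one (m : ZMod M)
  have h6 : (k - Real.log m) * v.re ≤ 3 * (k - Real.log m) := by nlinarith
  calc _ ≤ ‖(ArithmeticFunction.vonMangoldt m : ℂ)‖ * 1 * ‖(m:ℂ) ^ (-p)‖ * (Real.exp (3 * (k - Real.log m)) * ‖cexp (-(k * b))‖) := by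
        gcongr
    _ = _ := by rw [mul_one]

/-- The entire correction term. -/
def Jfun {M : ℕ} (χ : DirichletCharacter ℂ M) (l : ℝ) (e p : ℂ) (b : ℝ) (v : ℂ) : ℂ :=
  Ssum χ (Real.exp (2 * l)) (p + v) * cexp ((2 * l : ℝ) * (v - b))
    - Ssum χ (Real.exp l) (p + v) * cexp (l * (v - b))
    - e * dslope (fun v => qker l (v - b)) (1 - p) v

lemma Jfun_differentiable {M : ℕ} (χ : DirichletCharacter ℂ M) (l : ℝ) (e p : ℂ) (b : ℝ) :
    Differentiable ℂ (Jfun χ l e p b) := by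
  have hd : Differentiable ℂ (dslope (fun v => qker l (v - b)) (1 - p)) := by
    rw [← differentiableOn_univ, differentiableOn_dslope univ_mem, differentiableOn_univ]
    exact (qker_differentiable l).comp (by fun_prop : Differentiable ℂ (fun v : ℂ => v - b))
  have hS : ∀ Y, Differentiable ℂ (fun v => Ssum χ Y (p + v)) := fun Y =>
    (Ssum_differentiable χ Y).comp (by fun_prop : Differentiable ℂ (fun v : ℂ => p + v))
  have h1 := hS (Real.exp (2 * l))
  have h2 := hS (Real.exp l)
  have h3 : Differentiable ℂ (fun v : ℂ => cexp ((2 * l : ℝ) * (v - b))) := by fun_prop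
  have h4 : Differentiable ℂ (fun v : ℂ => cexp (l * (v - b))) := by fun_prop
  exact ((h1.mul h3).sub (h2.mul h4)).sub (hd.const_mul e)

lemma dslope_q (l : ℝ) (p : ℂ) (b : ℝ) {v : ℂ} (h : p + v ≠ 1) :
    dslope (fun v => qker l (v - b)) (1 - p) v = (qker l (v - b) - qker l (1 - p - b)) / (p + v - 1) := by
  have : v ≠ 1 - p := by rintro rfl; apply h; ring
  rw [dslope_of_ne _ this, slope_def_field]
  congr 1; ring

lemma qker_bound (l b : ℝ) (hl : 0 ≤ l) {v : ℂ} (hv : v.re ≤ 3) :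
    ‖qker l (v - b)‖ ≤ Real.exp (2 * l * (3 - b)) + Real.exp (l * (3 - b)) := by
  refine (qker_norm_le _ _).trans ?_
  simp only [sub_re, ofReal_re]
  gcongr

lemma Jfun_bound {M : ℕ} (χ : DirichletCharacter ℂ M) {l : ℝ} (hl : 0 ≤ l) {e p : ℂ} {b : ℝ}
    (he : e = 0 ∨ e = 1) :
    ∃ K R : ℝ, ∀ v : ℂ, v.re ≤ 3 → R ≤ ‖v‖ → ‖Jfun χ l e p b v‖ ≤ K := by
  obtain ⟨K₁, h1⟩ := Ssum_exp_bound χ (2 * l) p b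
  obtain ⟨K₂, h2⟩ := Ssum_exp_bound χ l p b
  refine ⟨K₁ + K₂ + (Real.exp (2 * l * (3 - b)) + Real.exp (l * (3 - b)) + ‖qker l (1 - p - b)‖),
    2 + ‖p‖, fun v hv hR => ?_⟩
  have hz : 1 ≤ ‖p + v - 1‖ := by
    have a1 := norm_sub_norm_le v (1 - p)
    have a2 := norm_sub_le (1:ℂ) p
    rw [norm_one] at a2
    rw [show p + v - 1 = v - (1 - p) by ring]
    linarith
  have hz1 : p + v ≠ 1 := by
    intro h; rw [h] at hz; norm_num at hz
  have h3 : ‖e * dslope (fun v => qker l (v - b)) (1 - p) v‖ ≤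
      Real.exp (2 * l * (3 - b)) + Real.exp (l * (3 - b)) + ‖qker l (1 - p - b)‖ := by
    rw [dslope_q l p b hz1, norm_mul, norm_div]
    have he1 : ‖e‖ ≤ 1 := by rcases he with rfl | rfl <;> simp
    have h4 : ‖qker l (v - b) - qker l (1 - p - b)‖ / ‖p + v - 1‖ ≤ ‖qker l (v - b) - qker l (1 - p - b)‖ :=
      div_le_self (norm_nonneg _) hz
    have h5 := norm_sub_le (qker l (v - b)) (qker l (1 - p - b))
    have h6 := qker_bound l b hl hv
    calc _ ≤ 1 * ‖qker l (v - b) - qker l (1 - p - b)‖ := by gcongr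
      _ ≤ _ := by linarith
  unfold Jfun
  refine (norm_sub_le _ _).trans ?_
  refine add_le_add ((norm_sub_le _ _).trans (add_le_add (h1 v hv) (h2 v hv))) h3

lemma bounded_bigO {f : ℂ → ℂ} {K R : ℝ} (h : ∀ v : ℂ, 0 ≤ v.re → R ≤ ‖v‖ → ‖f v‖ ≤ K * ‖v‖ ^ (1/2 : ℝ)) :
    f =O[infR] fun v => ‖v‖ ^ (1/2 : ℝ) := by
  refine Asymptotics.IsBigO.of_bound K ?_
  filter_upwards [infR_large R] with v hv
  rw [Real.norm_eq_abs, abs_of_nonneg (Real.rpow_nonneg (norm_nonneg _) _)]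
  exact h v hv.2 hv.1

lemma one_le_rpow_half {x : ℝ} (h : 1 ≤ x) : 1 ≤ x ^ (1/2 : ℝ) := Real.one_le_rpow h (by norm_num)

lemma Jfun_bigO {M : ℕ} (χ : DirichletCharacter ℂ M) {l : ℝ} (hl : 0 ≤ l) {e p : ℂ} {b : ℝ}
    (he : e = 0 ∨ e = 1) :
    (fun z => Jfun χ l e p b (-z)) =O[infR] fun z => ‖z‖ ^ (1/2 : ℝ) := by
  obtain ⟨K, R, h⟩ := Jfun_bound χ hl (p := p) (b := b) he
  refine bounded_bigO (K := |K|) (R := max 1 R) fun v hv hR => ?_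
  have h1 := h (-v) (by simp; linarith) (by rw [norm_neg]; exact (le_max_right _ _).trans hR)
  have h2 := one_le_rpow_half ((le_max_left _ _).trans hR)
  have h3 := le_abs_self K
  nlinarith [abs_nonneg K]

lemma log_growth (M : ℝ) (hM : 1 ≤ M) (t : ℝ) {v : ℂ} (hv : 1 ≤ ‖v‖) :
    Real.log (M * (2 + |t + v.im|)) ≤ 2 * (M * (3 + |t|)) ^ (1/2 : ℝ) * ‖v‖ ^ (1/2 : ℝ) := by
  have h0 : |t + v.im| ≤ |t| + ‖v‖ := (abs_add_le _ _).trans (by gcongr; exact abs_im_le_norm v)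
  have ht := abs_nonneg t
  have h1 : M * (2 + |t + v.im|) ≤ M * (3 + |t|) * ‖v‖ := by
    rw [mul_assoc]
    gcongr
    nlinarith
  have hx : 0 < M * (2 + |t + v.im|) := by positivity
  have h2 := Real.log_le_rpow_div hx.le (ε := 1/2) (by norm_num)
  have h3 : (M * (2 + |t + v.im|)) ^ (1/2 : ℝ) ≤ (M * (3 + |t|) * ‖v‖) ^ (1/2 : ℝ) :=
    Real.rpow_le_rpow hx.le h1 (by norm_num)
  rw [Real.mul_rpow (by positivity) (norm_nonneg _)] at h3
  linarith

/-- The shifted logarithmic derivative. -/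
def Gv (f : ℂ → ℂ) (p v : ℂ) : ℂ := deriv f (p + v) / f (p + v)

lemma B0_pos : 0 < B0 := by
  unfold B0; linarith [clam_nonneg]

lemma deriv_entire_differentiable {g : ℂ → ℂ} (hg : Differentiable ℂ g) : Differentiable ℂ (deriv g) := by
  have := hg.contDiff (n := 2)
  exact (contDiff_succ_iff_deriv.mp (show ContDiff ℂ (1+1) g from by
    simpa [one_add_one_eq_two] using this)).2.2.differentiable (by norm_num)

lemma LData.ne_zero {M : ℕ} [NeZero M] {χ : DirichletCharacter ℂ M} {f : ℂ → ℂ} {e : ℂ}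
    (h : LData χ f e) {s : ℂ} (hs : 1/2 < s.re) : f s ≠ 0 := by
  intro h0
  have := h.zero s (by linarith) h0
  linarith

lemma Gv_diff {M : ℕ} [NeZero M] {χ : DirichletCharacter ℂ M} {f : ℂ → ℂ} {e : ℂ}
    (h : LData χ f e) {p : ℂ} {δ : ℝ} (hδ : 0 < δ) (hp : p.re = 1/2 + δ) :
    DifferentiableOn ℂ (Gv f p) {z | -(δ/2) < z.re} := by
  have h1 := deriv_entire_differentiable h.diff
  have hs : Differentiable ℂ (fun v : ℂ => p + v) := by fun_prop
  refine DifferentiableOn.div (h1.comp hs).differentiableOn (h.diff.comp hs).differentiableOn ?_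
  intro v hv
  have hv' : -(δ/2) < v.re := hv
  exact h.ne_zero (by simp only [add_re, hp]; linarith)

lemma Gv_bound {M : ℕ} [NeZero M] {χ : DirichletCharacter ℂ M} {f : ℂ → ℂ} {e : ℂ}
    (h : LData χ f e) {p : ℂ} {δ : ℝ} (hδ : 0 < δ) (hp : p.re = 1/2 + δ) {v : ℂ} (hv : 0 ≤ v.re)
    (hv1 : 1 ≤ ‖v‖) :
    ‖Gv f p v‖ ≤ B0 * (2 * (M * (3 + |p.im|)) ^ (1/2 : ℝ)) * (1 + 1 / δ) * ‖v‖ ^ (1/2 : ℝ) := by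
  have hM1 : (1:ℝ) ≤ M := by exact_mod_cast NeZero.one_le
  have hre : (p + v).re = 1/2 + δ + v.re := by simp [hp]
  have h1 := (G_bounds h (w := p + v) (by linarith)).2
  rw [hre, add_im] at h1
  have h2 := log_growth M hM1 p.im hv1
  have hB := B0_pos
  have h3 : 1 / (1/2 + δ + v.re - 1/2) ≤ 1 / δ := one_div_le_one_div_of_le hδ (by linarith)
  have h4 : 0 < 1/2 + δ + v.re - 1/2 := by linarith
  unfold Gv
  calc _ ≤ _ := h1
    _ ≤ B0 * (2 * (M * (3 + |p.im|)) ^ (1/2 : ℝ) * ‖v‖ ^ (1/2 : ℝ)) * (1 + 1 / δ) := by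
      gcongr
    _ = _ := by ring

lemma Gv_bigO {M : ℕ} [NeZero M] {χ : DirichletCharacter ℂ M} {f : ℂ → ℂ} {e : ℂ}
    (h : LData χ f e) {p : ℂ} {δ : ℝ} (hδ : 0 < δ) (hp : p.re = 1/2 + δ) :
    Gv f p =O[infR] fun v => ‖v‖ ^ (1/2 : ℝ) :=
  bounded_bigO (R := 1) fun _ hv h1 => Gv_bound h hδ hp hv h1

/-- The majorant. -/
def Uv (M : ℕ) (f : ℂ → ℂ) (p v : ℂ) : ℂ :=
  Gv f p v + 2 * B0 * ((Real.log (2 * M) : ℝ) + Complex.log (p + v + 2))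

lemma Uv_diff {M : ℕ} [NeZero M] {χ : DirichletCharacter ℂ M} {f : ℂ → ℂ} {e : ℂ}
    (h : LData χ f e) {p : ℂ} {δ : ℝ} (hδ : 0 < δ) (hp : p.re = 1/2 + δ) :
    DifferentiableOn ℂ (Uv M f p) {z | -(δ/2) < z.re} := by
  refine (Gv_diff h hδ hp).add ?_
  refine DifferentiableOn.const_mul ?_ _
  refine (differentiableOn_const _).add ?_
  refine DifferentiableOn.clog (by fun_prop) ?_
  intro v hv
  have hv' : -(δ/2) < v.re := hv
  left
  simp [hp]; linarith

lemma Uv_bigO {M : ℕ} [NeZero M] {χ : DirichletCharacter ℂ M} {f : ℂ → ℂ} {e : ℂ}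
    (h : LData χ f e) {p : ℂ} {δ : ℝ} (hδ : 0 < δ) (hp : p.re = 1/2 + δ) :
    Uv M f p =O[infR] fun v => ‖v‖ ^ (1/2 : ℝ) := by
  refine (Gv_bigO h hδ hp).add ?_
  refine Asymptotics.IsBigO.const_mul_left ?_ _
  refine bounded_bigO (R := 1) (K := |Real.log (2 * M)| + (2 * (‖p‖ + 3) ^ (1/2:ℝ) + Real.pi)) fun v hv hv1 => ?_
  have h1 := one_le_rpow_half hv1
  have hw : 1 ≤ ‖p + v + 2‖ := by
    refine le_trans ?_ (re_le_norm _)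
    simp [hp]; linarith
  have h2 : ‖Complex.log (p + v + 2)‖ ≤ Real.log ‖p + v + 2‖ + Real.pi := by
    refine (norm_le_abs_re_add_abs_im _).trans ?_
    rw [log_re, log_im, abs_of_nonneg (Real.log_nonneg hw)]
    gcongr
    exact abs_arg_le_pi _
  have h3 : ‖p + v + 2‖ ≤ (‖p‖ + 3) * ‖v‖ := by
    have a1 := norm_add_le (p + v) 2
    have a2 := norm_add_le p v
    have a3 : ‖(2:ℂ)‖ = 2 := by simp
    nlinarith [norm_nonneg p]
  have h4 := Real.log_le_rpow_div (norm_nonneg (p + v + 2)) (ε := 1/2) (by norm_num)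
  have h5 : ‖p + v + 2‖ ^ (1/2:ℝ) ≤ ((‖p‖ + 3) * ‖v‖) ^ (1/2:ℝ) :=
    Real.rpow_le_rpow (norm_nonneg _) h3 (by norm_num)
  rw [Real.mul_rpow (by positivity) (norm_nonneg _)] at h5
  have h6 := norm_add_le ((Real.log (2 * M) : ℝ) : ℂ) (Complex.log (p + v + 2))
  rw [norm_real, Real.norm_eq_abs] at h6
  have hpi := Real.pi_pos
  have h7 : |Real.log (2 * M)| ≤ |Real.log (2 * M)| * ‖v‖ ^ (1/2:ℝ) := le_mul_of_one_le_right (abs_nonneg _) h1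
  have h8 : Real.pi ≤ Real.pi * ‖v‖ ^ (1/2:ℝ) := le_mul_of_one_le_right hpi.le h1
  calc _ ≤ _ := h6
    _ ≤ _ := by nlinarith

lemma Uv_re {M : ℕ} {f : ℂ → ℂ} {p v : ℂ} : (Uv M f p v).re =
    (Gv f p v).re + 2 * B0 * (Real.log (2 * M) + Real.log ‖p + v + 2‖) := by
  unfold Uv
  rw [show (2:ℂ) * (B0:ℂ) = ((2 * B0 : ℝ) : ℂ) by push_cast; ring, add_re, re_ofReal_mul, add_re, log_re, ofReal_re]

lemma Uv_dom {M : ℕ} [NeZero M] {χ : DirichletCharacter ℂ M} {f : ℂ → ℂ} {e : ℂ}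
    (h : LData χ f e) {p : ℂ} {δ : ℝ} (hδ : 0 < δ) (hp : p.re = 1/2 + δ) (y : ℝ) :
    |(Gv f p (y * I)).re| ≤ (Uv M f p (y * I)).re := by
  have hM1 : (1:ℝ) ≤ M := by exact_mod_cast NeZero.one_le
  have hre : (p + y * I).re = 1/2 + δ := by simp [hp]
  have h1 := (G_bounds h (w := p + y * I) (by linarith)).1
  have hn1 : 2 ≤ ‖p + y * I + 2‖ := by
    refine le_trans ?_ (re_le_norm _)
    rw [add_re, hre]; simp; linarith
  have hn2 : |(p + y * I).im| ≤ ‖p + y * I + 2‖ := by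
    have := abs_im_le_norm (p + y * I + 2)
    simpa using this
  have h2 : Real.log (M * (2 + |(p + y * I).im|)) ≤ Real.log (2 * M) + Real.log ‖p + y * I + 2‖ := by
    rw [← Real.log_mul (by positivity) (by positivity)]
    have := abs_nonneg (p + y * I).im
    apply Real.log_le_log (by positivity)
    nlinarith
  have h3 : 0 ≤ Real.log (M * (2 + |(p + y * I).im|)) := by
    apply Real.log_nonneg
    have := abs_nonneg (p + y * I).im
    nlinarith
  have hB := B0_pos
  rw [Uv_re, abs_le]
  change -(B0 * Real.log (M * (2 + |(p + y * I).im|))) ≤ (Gv f p (y * I)).re at h1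
  constructor <;> nlinarith

lemma tail_exp {M : ℕ} [NeZero M] (χ : DirichletCharacter ℂ M) {z : ℂ} (hz : 2 ≤ z.re) {k : ℝ} (hk : 0 ≤ k)
    (w : ℂ) :
    ‖(deriv (LFunction χ) z / LFunction χ z + Ssum χ (Real.exp k) z) * cexp (k * (z - w))‖
      ≤ Real.exp (k * (2 - w.re)) * clam := by
  have h1 := logDeriv_tail χ hz (Y := Real.exp k) (Real.one_le_exp hk)
  rw [norm_mul, Complex.norm_exp, re_ofReal_mul, sub_re]
  unfold Ssum
  calc _ ≤ (Real.exp k ^ (-(z.re - 2)) * clam) * Real.exp (k * (z.re - w.re)) := by gcongr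
    _ = _ := by
      rw [← Real.exp_mul, mul_right_comm, ← Real.exp_add]
      congr 2; ring

lemma P_large {M : ℕ} [NeZero M] {χ : DirichletCharacter ℂ M} {f : ℂ → ℂ} {e : ℂ}
    (h : LData χ f e) {p v : ℂ} {l : ℝ} (b : ℝ) (h1 : p + v ≠ 1) (h2 : 1/2 < (p + v).re) :
    Gv f p v * qker l (v - b) + Jfun χ l e p b v =
      (deriv (LFunction χ) (p + v) / LFunction χ (p + v) + Ssum χ (Real.exp (2 * l)) (p + v)) *
          cexp ((2 * l : ℝ) * (p + v - (p + b)))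
      - (deriv (LFunction χ) (p + v) / LFunction χ (p + v) + Ssum χ (Real.exp l) (p + v)) *
          cexp (l * (p + v - (p + b)))
      + e * (qker l (1 - p - b) / (p + v - 1)) := by
  have hz : p + v - 1 ≠ 0 := sub_ne_zero.mpr h1
  unfold Gv Jfun
  rw [h.logDeriv _ h1 (h.ne_zero h2), dslope_q l p b h1]
  have e1 : p + v - (p + b) = v - b := by ring
  have e2 : qker l (v - b) = cexp ((2 * l : ℝ) * (v - b)) - cexp (l * (v - b)) := by
    unfold qker; push_cast; rfl
  rw [e1, e2]
  field_simp
  ring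

lemma P_bigO {M : ℕ} [NeZero M] {χ : DirichletCharacter ℂ M} {f : ℂ → ℂ} {e : ℂ}
    (h : LData χ f e) {p : ℂ} {δ : ℝ} (hδ : 0 < δ) (hp : p.re = 1/2 + δ) {l : ℝ} (hl : 0 ≤ l) (b : ℝ) :
    (fun v => Gv f p v * qker l (v - b) + Jfun χ l e p b v) =O[infR] fun v => ‖v‖ ^ (1/2 : ℝ) := by
  obtain ⟨K, R, hJ⟩ := Jfun_bound χ hl (p := p) (b := b) h.he
  set K1 := B0 * (2 * (M * (3 + |p.im|)) ^ (1/2 : ℝ)) * (1 + 1 / δ) with hK1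
  set K2 := Real.exp (2 * l * (3 - b)) + Real.exp (l * (3 - b)) with hK2
  set K3 := Real.exp ((2 * l) * (2 - (p + b).re)) * clam + Real.exp (l * (2 - (p + b).re)) * clam
    + ‖qker l (1 - p - b)‖ with hK3
  have hB := B0_pos
  have hcl := clam_nonneg
  have hK10 : 0 ≤ K1 := by positivity
  have hK20 : 0 ≤ K2 := by positivity
  have hK30 : 0 ≤ K3 := by positivity
  refine bounded_bigO (R := max 1 R) (K := K1 * K2 + |K| + K3) fun v hv hR => ?_
  have hv1 : 1 ≤ ‖v‖ := (le_max_left _ _).trans hR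
  have hR' := (le_max_right _ _).trans hR
  have hn := one_le_rpow_half hv1
  rcases le_total v.re 3 with h3 | h3
  · have a1 := Gv_bound h hδ hp hv hv1
    have a2 := qker_bound l b hl h3
    have a3 := hJ v h3 hR'
    have a4 : ‖Gv f p v * qker l (v - b)‖ ≤ K1 * ‖v‖ ^ (1/2:ℝ) * K2 := by
      rw [norm_mul]; gcongr
    have a5 : |K| ≤ |K| * ‖v‖ ^ (1/2:ℝ) := le_mul_of_one_le_right (abs_nonneg _) hn
    have a6 : 0 ≤ K3 * ‖v‖ ^ (1/2:ℝ) := by positivity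
    have := norm_add_le (Gv f p v * qker l (v - b)) (Jfun χ l e p b v)
    linarith [le_abs_self K]
  · have hre : 3 ≤ (p + v).re := by simp [hp]; linarith
    have hz1 : p + v ≠ 1 := by
      intro h'; rw [h'] at hre; norm_num at hre
    rw [P_large h b hz1 (by linarith)]
    have a1 := tail_exp χ (z := p + v) (by linarith) (k := 2 * l) (by positivity) (p + b)
    have a2 := tail_exp χ (z := p + v) (by linarith) (k := l) hl (p + b)
    have a3 : ‖e * (qker l (1 - p - b) / (p + v - 1))‖ ≤ ‖qker l (1 - p - b)‖ := by
      have he1 : ‖e‖ ≤ 1 := by rcases h.he with rfl | rfl <;> simp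
      have hz : 1 ≤ ‖p + v - 1‖ := by
        refine le_trans ?_ (re_le_norm _)
        simp only [sub_re, one_re]; linarith
      rw [norm_mul, norm_div]
      have := div_le_self (norm_nonneg (qker l (1 - p - b))) hz
      calc _ ≤ 1 * ‖qker l (1 - p - b)‖ := by gcongr
        _ = _ := one_mul _
    have a4 : K3 ≤ K3 * ‖v‖ ^ (1/2:ℝ) := le_mul_of_one_le_right hK30 hn
    have a5 : 0 ≤ (K1 * K2 + |K|) * ‖v‖ ^ (1/2:ℝ) := by positivity
    refine (norm_add_le _ _).trans ((add_le_add_left (norm_sub_le _ _) _).trans ?_)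
    linarith

lemma P_deriv {M : ℕ} [NeZero M] {χ : DirichletCharacter ℂ M} {f : ℂ → ℂ} {e : ℂ}
    (h : LData χ f e) {p s : ℂ} {l : ℝ} (b : ℝ) (hs : p + b = s) (h1 : s ≠ 1) (h2 : 1/2 < s.re) :
    deriv (fun v => Gv f p v * qker l (v - b) + Jfun χ l e p b v) b =
      l * (deriv (LFunction χ) s / LFunction χ s) +
      (∑ m ∈ Finset.Icc 1 ⌊Real.exp (2 * l)⌋₊,
        (ArithmeticFunction.vonMangoldt m : ℂ) * χ (m : ZMod M) * (m:ℂ) ^ (-s) * ((2 * l - Real.log m : ℝ) : ℂ)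
      - ∑ m ∈ Finset.Icc 1 ⌊Real.exp l⌋₊,
        (ArithmeticFunction.vonMangoldt m : ℂ) * χ (m : ZMod M) * (m:ℂ) ^ (-s) * ((l - Real.log m : ℝ) : ℂ))
      - e * (qker l (1 - s) / (s - 1) ^ 2) := by
  have hs1 : s - 1 ≠ 0 := sub_ne_zero.mpr h1
  have hf0 := h.ne_zero h2
  -- pieces
  have dshift : HasDerivAt (fun v : ℂ => p + v) 1 (b:ℂ) := (hasDerivAt_id _).const_add p
  have dG : DifferentiableAt ℂ (Gv f p) b := by
    have hsh : Differentiable ℂ (fun v : ℂ => p + v) := by fun_prop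
    refine DifferentiableAt.div (((deriv_entire_differentiable h.diff).comp hsh) b)
      ((h.diff.comp hsh) b) ?_
    simp only [hs]; exact hf0
  have dq : HasDerivAt (fun v : ℂ => qker l (v - b)) l b := by
    unfold qker
    have a1 : HasDerivAt (fun v : ℂ => 2 * l * (v - b)) (2 * l) (b:ℂ) := by
      simpa using ((hasDerivAt_id (b:ℂ)).sub_const (b:ℂ)).const_mul (2 * (l:ℂ))
    have a2 : HasDerivAt (fun v : ℂ => l * (v - b)) l (b:ℂ) := by
      simpa using ((hasDerivAt_id (b:ℂ)).sub_const (b:ℂ)).const_mul (l:ℂ)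
    refine (a1.cexp.sub a2.cexp).congr_deriv ?_
    simp; ring
  have q0 : qker l ((b:ℂ) - b) = 0 := by simp [qker]
  have dS : ∀ k : ℝ, HasDerivAt (fun v : ℂ => Ssum χ (Real.exp k) (p + v) * cexp (k * (v - b)))
      (∑ m ∈ Finset.Icc 1 ⌊Real.exp k⌋₊,
        (ArithmeticFunction.vonMangoldt m : ℂ) * χ (m : ZMod M) * (m:ℂ) ^ (-s) * ((k - Real.log m : ℝ) : ℂ)) b := by
    intro k
    have a1 : HasDerivAt (fun v : ℂ => Ssum χ (Real.exp k) (p + v)) _ (b:ℂ) :=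
      HasDerivAt.comp_const_add p (b:ℂ) (Ssum_hasDerivAt χ (Real.exp k) (p + b))
    have a2 : HasDerivAt (fun v : ℂ => k * (v - b)) k (b:ℂ) := by
      simpa using ((hasDerivAt_id (b:ℂ)).sub_const (b:ℂ)).const_mul (k:ℂ)
    refine (a1.mul a2.cexp).congr_deriv ?_
    rw [hs]
    unfold Ssum
    simp only [sub_self, mul_zero, Complex.exp_zero, mul_one, one_mul]
    rw [Finset.sum_mul, ← Finset.sum_add_distrib]
    refine Finset.sum_congr rfl fun m _ => ?_
    push_cast; ring
  have dD : HasDerivAt (dslope (fun v => qker l (v - b)) (1 - p))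
      (l / (s - 1) + qker l (1 - s) / (s - 1) ^ 2) b := by
    have hev : dslope (fun v => qker l (v - b)) (1 - p) =ᶠ[𝓝 (b:ℂ)]
        fun v => (qker l (v - b) - qker l (1 - s)) / (p + v - 1) := by
      have hc : ContinuousAt (fun v : ℂ => p + v) b := by fun_prop
      have := hc.eventually_ne (y := 1) (by rw [hs]; exact h1)
      filter_upwards [this] with v hv
      rw [dslope_q l p b hv, ← hs]
      congr 3; ring
    refine HasDerivAt.congr_of_eventuallyEq ?_ hev
    have a1 := (dq.sub_const (qker l (1 - s))).div (dshift.sub_const 1) (by rw [hs]; exact hs1)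
    refine a1.congr_deriv ?_
    rw [q0, hs]
    field_simp
    ring
  have dJ : HasDerivAt (Jfun χ l e p b) _ (b:ℂ) := ((dS (2 * l)).sub (dS l)).sub (dD.const_mul e)
  have dP := (dG.hasDerivAt.mul dq).add dJ
  refine (HasDerivAt.deriv dP).trans ?_
  rw [q0]
  have : Gv f p b = deriv (LFunction χ) s / LFunction χ s + e / (s - 1) := by
    unfold Gv; rw [hs]; exact h.logDeriv s h1 hf0
  rw [this]
  ring

/-- `∑_{m ≤ X²} Λ_X(m) χ(m) m^{-s}`. -/
def SX {M : ℕ} (χ : DirichletCharacter ℂ M) (X : ℝ) (s : ℂ) : ℂ :=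
  ∑ m ∈ Finset.Icc 1 ⌊X ^ 2⌋₊, (LambdaX X m : ℂ) * χ (m : ZMod M) * (m : ℂ) ^ (-s)

lemma SX_weights {M : ℕ} (χ : DirichletCharacter ℂ M) {X : ℝ} (hX : 4 ≤ X) (s : ℂ) :
    ∑ m ∈ Finset.Icc 1 ⌊Real.exp (2 * Real.log X)⌋₊,
        (ArithmeticFunction.vonMangoldt m : ℂ) * χ (m : ZMod M) * (m:ℂ) ^ (-s) *
          ((2 * Real.log X - Real.log m : ℝ) : ℂ)
      - ∑ m ∈ Finset.Icc 1 ⌊Real.exp (Real.log X)⌋₊,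
        (ArithmeticFunction.vonMangoldt m : ℂ) * χ (m : ZMod M) * (m:ℂ) ^ (-s) *
          ((Real.log X - Real.log m : ℝ) : ℂ)
      = Real.log X * SX χ X s := by
  have hX0 : 0 < X := by linarith
  have hl : 0 < Real.log X := Real.log_pos (by linarith)
  have e1 : Real.exp (Real.log X) = X := Real.exp_log hX0
  have e2 : Real.exp (2 * Real.log X) = X ^ 2 := by
    rw [two_mul, Real.exp_add, e1]; ring
  rw [e1, e2]
  have hXX : X ≤ X ^ 2 := by nlinarith
  have hsub : Finset.Icc 1 ⌊X⌋₊ = (Finset.Icc 1 ⌊X ^ 2⌋₊).filter (fun m : ℕ => (m:ℝ) ≤ X) := by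
    ext m
    simp only [Finset.mem_Icc, Finset.mem_filter]
    constructor
    · rintro ⟨h1, h2⟩
      exact ⟨⟨h1, h2.trans (Nat.floor_le_floor hXX)⟩, (Nat.le_floor_iff hX0.le).mp h2⟩
    · rintro ⟨⟨h1, _⟩, h2⟩
      exact ⟨h1, (Nat.le_floor_iff hX0.le).mpr h2⟩
  rw [hsub, Finset.sum_filter, ← Finset.sum_sub_distrib, SX, Finset.mul_sum]
  refine Finset.sum_congr rfl fun m hm => ?_
  have hm1 : (0:ℝ) < m := by exact_mod_cast (Finset.mem_Icc.mp hm).1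
  unfold LambdaX wX
  split_ifs with h
  · push_cast; ring
  · rw [Real.log_div (by positivity) hm1.ne', Real.log_pow]
    have : ((Real.log X : ℝ) : ℂ) ≠ 0 := by exact_mod_cast hl.ne'
    push_cast
    field_simp
    ring

lemma kappa_bound {X t σ : ℝ} {s : ℂ} (hX : 4 ≤ X) (hXt : X ≤ t ^ 2) (hσ : 1/2 ≤ σ) (hs : s = σ + I * t) :
    ‖qker (Real.log X) (1 - s) / (s - 1) ^ 2‖ ≤ 2 := by
  have hl : 0 < Real.log X := Real.log_pos (by linarith)
  have e1 : Real.exp (Real.log X) = X := Real.exp_log (by linarith)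
  have h1 := qker_norm_le (Real.log X) (1 - s)
  have hre : (1 - s).re = 1 - σ := by simp [hs]
  rw [hre] at h1
  have h2 : Real.exp (2 * Real.log X * (1 - σ)) ≤ X := by
    rw [← e1]; apply Real.exp_le_exp.mpr; rw [e1]; nlinarith
  have h3 : Real.exp (Real.log X * (1 - σ)) ≤ X := by
    rw [← e1]; apply Real.exp_le_exp.mpr; rw [e1]; nlinarith
  have h4 : t ^ 2 ≤ ‖s - 1‖ ^ 2 := by
    have : |t| ≤ ‖s - 1‖ := by
      have := abs_im_le_norm (s - 1)
      simpa [hs] using this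
    rw [← sq_abs t]; gcongr
  rw [norm_div, norm_pow, div_le_iff₀ (by linarith)]
  linarith

set_option maxHeartbeats 1000000 in
lemma core {M : ℕ} [NeZero M] {χ : DirichletCharacter ℂ M} {f : ℂ → ℂ} {e : ℂ}
    (h : LData χ f e) {t X σ : ℝ} (ht : 2 ≤ |t|) (hX : 4 ≤ X) (hXt : X ≤ t ^ 2) (hσ : sigma1 X ≤ σ) :
    ‖deriv (LFunction χ) (σ + I * t) / LFunction χ (σ + I * t) + SX χ X (σ + I * t)‖ ≤
      2 + 1/4 * (‖deriv f (sigma1 X + I * t) / f (sigma1 X + I * t)‖ + 6 * B0 * Real.log (M * (1 + |t|))) := by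
  have hM1 : (1:ℝ) ≤ M := by exact_mod_cast NeZero.one_le
  have hB := B0_pos
  set l := Real.log X with hl
  have hl1 : 1.38 ≤ l := by
    have a1 : Real.log 4 ≤ l := Real.log_le_log (by norm_num) hX
    have a2 : Real.log 4 = 2 * Real.log 2 := by
      rw [show (4:ℝ) = 2 ^ 2 by norm_num, Real.log_pow]; norm_num
    have := Real.log_two_gt_d9
    linarith
  have hl0 : 0 < l := by linarith
  set δ := 1 / (4 * l) with hδ
  have hδ0 : 0 < δ := by positivity
  set p : ℂ := ((1/2 + δ : ℝ) : ℂ) + t * I with hp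
  have hpre : p.re = 1/2 + δ := by simp [hp]
  set b := σ - (1/2 + δ) with hb
  set b₁ := 15 / (4 * l) with hb₁
  have hb₁0 : 0 < b₁ := by positivity
  have hs1 : sigma1 X = 1/2 + δ + b₁ := by
    rw [sigma1, hδ, hb₁, ← hl]; field_simp; ring
  have hbb : b₁ ≤ b := by rw [hb]; linarith
  set s : ℂ := σ + I * t with hs
  have hps : p + b = s := by
    rw [hp, hb, hs]; push_cast; ring
  have hps1 : p + b₁ = sigma1 X + I * t := by
    rw [hp, hs1]; push_cast; ring
  have hsne : s ≠ 1 := by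
    intro h'
    have : s.im = 0 := by rw [h']; simp
    simp [hs] at this
    rw [this] at ht; norm_num at ht
  have hsre : s.re = σ := by simp [hs]
  have hσ2 : 1/2 < σ := by linarith
  have key := main_analytic (G := Gv f p) (J := Jfun χ l e p b) (U := Uv M f p) (η := δ/2) (b := b) (b₁ := b₁)
    (l := l) (by positivity) hb₁0 hbb hl0.le (Gv_diff h hδ0 hpre) (Gv_bigO h hδ0 hpre)
    (Uv_diff h hδ0 hpre) (Uv_bigO h hδ0 hpre) (Jfun_differentiable χ l e p b) (Jfun_bigO χ hl0.le h.he)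
    (P_bigO h hδ0 hpre hl0.le b) (Uv_dom h hδ0 hpre)
  rw [P_deriv h b hps hsne (by rw [hsre]; exact hσ2), SX_weights χ hX s, ← mul_add] at key
  set E := deriv (LFunction χ) s / LFunction χ s + SX χ X s with hE
  set y := (M:ℝ) * (1 + |t|) with hy
  have hy3 : 3 ≤ y := by rw [hy]; nlinarith
  set ℓ := Real.log y with hℓ
  have hℓ0 : 0 ≤ ℓ := Real.log_nonneg (by linarith)
  -- upper bound for U
  have hU : (Uv M f p b₁).re ≤ ‖deriv f (sigma1 X + I * t) / f (sigma1 X + I * t)‖ + 6 * B0 * ℓ := by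
    rw [Uv_re]
    have a1 : (Gv f p b₁).re ≤ ‖deriv f (sigma1 X + I * t) / f (sigma1 X + I * t)‖ := by
      unfold Gv; rw [hps1]; exact re_le_norm _
    have a2 : Real.log (2 * M) + Real.log ‖p + b₁ + 2‖ ≤ 3 * ℓ := by
      have hs1u : sigma1 X ≤ 7/2 := by
        have : 4 / l ≤ 3 := by rw [div_le_iff₀ hl0]; linarith
        rw [sigma1, ← hl]; linarith
      have hs1p : 0 < sigma1 X := by rw [hs1]; positivity
      have n1 : ‖p + b₁ + 2‖ ≤ 11/2 + |t| := by
        refine (norm_le_abs_re_add_abs_im _).trans ?_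
        rw [hps1]
        simp
        rw [abs_of_nonneg (by linarith)]; linarith
      have n2 : 2 ≤ ‖p + b₁ + 2‖ := by
        refine le_trans ?_ (re_le_norm _)
        rw [hps1]; simp; exact hs1p.le
      rw [← Real.log_mul (by positivity) (by positivity), hℓ,
        show 3 * Real.log y = Real.log (y ^ 3) by rw [Real.log_pow]; norm_num]
      apply Real.log_le_log (by positivity)
      have n3 : 2 * M * ‖p + b₁ + 2‖ ≤ 2 * M * (11/2 + |t|) := by gcongr
      have n4 : 2 * M * (11/2 + |t|) ≤ 5 * y := by rw [hy]; nlinarith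
      have n5 : 5 * y ≤ y ^ 3 := by nlinarith [mul_nonneg (by linarith : 0 ≤ y - 3) (by linarith : 0 ≤ y), sq_nonneg y, mul_nonneg (mul_nonneg (by linarith : 0 ≤ y - 3) (by linarith : 0 ≤ y)) (by linarith : 0 ≤ y)]
      linarith
    nlinarith
  set Q := ‖deriv f (sigma1 X + I * t) / f (sigma1 X + I * t)‖ + 6 * B0 * ℓ with hQ
  have hQ0 : 0 ≤ Q := by positivity
  have hlb : 15/4 ≤ l * b := by
    have : l * b₁ = 15/4 := by rw [hb₁]; field_simp
    rw [← this]; gcongr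
  have he1 : Real.exp (-l * b) ≤ 1/8 := by
    have a1 : Real.exp (-l * b) ≤ Real.exp (-3) := Real.exp_le_exp.mpr (by linarith)
    have a2 : Real.exp (-3) ≤ 1/8 := by
      rw [Real.exp_neg, ← one_div]
      apply one_div_le_one_div_of_le (by norm_num)
      have := Real.exp_one_gt_d9
      have e3 : Real.exp 3 = Real.exp 1 ^ 3 := by rw [← Real.exp_nat_mul]; norm_num
      rw [e3]
      calc (8:ℝ) = 2 ^ 3 := by norm_num
        _ ≤ _ := by gcongr; linarith
    linarith
  have he2 : Real.exp (-2 * l * b) ≤ 1/8 := by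
    refine le_trans (Real.exp_le_exp.mpr ?_) he1
    linarith
  have hcoef : (Real.exp (-2 * l * b) + Real.exp (-l * b)) / b₁ * (Uv M f p b₁).re ≤ l * (1/4 * Q) := by
    have a1 : (Real.exp (-2 * l * b) + Real.exp (-l * b)) / b₁ ≤ l * (1/4) := by
      rw [div_le_iff₀ hb₁0, show l * (1/4) * b₁ = 15/16 by rw [hb₁]; field_simp; norm_num]
      linarith
    calc _ ≤ (Real.exp (-2 * l * b) + Real.exp (-l * b)) / b₁ * Q := by gcongr
      _ ≤ l * (1/4) * Q := by gcongr
      _ = _ := by ring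
  have hκ : ‖e * (qker l (1 - s) / (s - 1) ^ 2)‖ ≤ 2 := by
    have he1 : ‖e‖ ≤ 1 := by rcases h.he with rfl | rfl <;> simp
    rw [norm_mul]
    calc _ ≤ 1 * (2:ℝ) := by
          gcongr
          exact kappa_bound hX hXt hσ2.le hs
      _ = 2 := by norm_num
  have hfin : l * ‖E‖ ≤ l * (1/4 * Q) + 2 := by
    have a1 : ‖(l:ℂ) * E‖ = l * ‖E‖ := by
      rw [norm_mul, norm_real, Real.norm_eq_abs, abs_of_pos hl0]
    have a2 := norm_sub_norm_le ((l:ℂ) * E) (e * (qker l (1 - s) / (s - 1) ^ 2))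
    linarith
  have : l * ‖E‖ ≤ l * (2 + 1/4 * Q) := by rw [mul_add]; linarith
  exact le_of_mul_le_mul_left this hl0

/-- **Equation (2.3)**: under GRH for `L(s,χ)`, for `σ ≥ σ₁ = 1/2 + 4/log X`,
`L'/L(s,χ) = -∑_{n ≤ X²} Λ_X(n) χ(n) n^{-s} + O(E_χ(X,t))` with an absolute implied
constant. -/
theorem log_deriv_L_approximation :
    ∃ C > (0 : ℝ), ∀ (M : ℕ) [NeZero M] (χ : DirichletCharacter ℂ M), χ.IsPrimitive →
      GRHchar χ →
      ∀ t : ℝ, 2 ≤ |t| → ∀ X : ℝ, 4 ≤ X → X ≤ t ^ 2 →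
      ∀ σ : ℝ, sigma1 X ≤ σ →
      ‖deriv (LFunction χ) (σ + I * t) / LFunction χ (σ + I * t)
          + ∑ m ∈ Finset.Icc 1 ⌊X ^ 2⌋₊,
              (LambdaX X m : ℂ) * χ (m : ZMod M) * (m : ℂ) ^ (-((σ : ℂ) + I * t))‖
        ≤ C * EchiT χ X t := by
  have hB := B0_pos
  refine ⟨4 + 2 * B0, by linarith, ?_⟩
  intro M _ χ hprim hgrh t ht X hX hXt σ hσ
  obtain ⟨f, e, h⟩ := exists_LData χ hprim hgrh
  have hM1 : (1:ℝ) ≤ M := by exact_mod_cast NeZero.one_le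
  have hy3 : 3 ≤ (M:ℝ) * (1 + |t|) := by nlinarith
  have hℓ1 : 1 ≤ Real.log (M * (1 + |t|)) := by
    rw [Real.le_log_iff_exp_le (by linarith)]
    linarith [Real.exp_one_lt_d9]
  have hl0 : 0 < Real.log X := Real.log_pos (by linarith)
  have hE : EchiT χ X t = ‖SX χ X (sigma1 X + I * t)‖ + Real.log (M * (1 + |t|)) := by
    unfold EchiT SX
    congr 2
    refine Finset.sum_congr rfl fun m _ => ?_
    congr 2; ring
  have c1 := core h ht hX hXt hσ
  have c2 := core h ht hX hXt le_rfl
  rw [hE]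
  set s₁ : ℂ := sigma1 X + I * t with hs₁
  have hsim : s₁.im = t := by simp [hs₁]
  have hsne : s₁ ≠ 1 := by
    intro h'
    have : t = 0 := by rw [← hsim, h']; simp
    rw [this] at ht; norm_num at ht
  have hsre : 1/2 < s₁.re := by
    have : 0 < 4 / Real.log X := by positivity
    simp [hs₁, sigma1, hl0]
  have hG : ‖deriv f s₁ / f s₁‖ ≤ ‖deriv (LFunction χ) s₁ / LFunction χ s₁‖ + 1/2 := by
    rw [h.logDeriv s₁ hsne (h.ne_zero hsre)]
    refine (norm_add_le _ _).trans ?_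
    gcongr
    have he1 : ‖e‖ ≤ 1 := by rcases h.he with rfl | rfl <;> simp
    have hn : 2 ≤ ‖s₁ - 1‖ := by
      have := abs_im_le_norm (s₁ - 1)
      rw [sub_im, hsim, one_im, sub_zero] at this
      linarith
    rw [norm_div]
    calc _ ≤ (1:ℝ) / 2 := by gcongr
      _ = _ := rfl
  have hF : ‖deriv (LFunction χ) s₁ / LFunction χ s₁‖ ≤
      ‖deriv (LFunction χ) s₁ / LFunction χ s₁ + SX χ X s₁‖ + ‖SX χ X s₁‖ := by
    have := norm_sub_le (deriv (LFunction χ) s₁ / LFunction χ s₁ + SX χ X s₁) (SX χ X s₁)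
    simpa using this
  have hS := norm_nonneg (SX χ X s₁)
  refine le_trans c1 ?_
  nlinarith

end
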